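/- arXiv:1904.08568 — 2 statements merged into one kernel-verified Lean document; each statement's English description precedes it below -/
import Mathlib

section
/- For all t > 0, r ∈ (0,π/2), η ∈ (0,π), the double series defining p_t(r,η) converges, is smooth in (t,r,η), and satisfies the heat equation ∂p/∂t = ∂²p/∂r² + (7·cot r − 7·tan r)·∂p/∂r + tan²r·(∂²p/∂η² + 6·cot η·∂p/∂η). -/
open Real MeasureTheory Filter Topology

/-- Jacobi polynomial `P_k^{3,b}` (with `b = m+3` octonionic, `b = m+1` quaternionic),
given by the polynomial extension of the Rodrigues formula. -/
noncomputable def jacP (k b : ℕ) : Polynomial ℝ :=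
  Polynomial.C ((-1 : ℝ) ^ k / (2 ^ k * (Nat.factorial k : ℝ))) *
    (Polynomial.derivative^[k]
        ((1 - Polynomial.X) ^ (k + 3) * (1 + Polynomial.X) ^ (b + k)) /
      ((1 - Polynomial.X) ^ 3 * (1 + Polynomial.X) ^ b))

/-- Normalized eigenfunction `h_m` of the radial Laplacian on `S^7`. -/
noncomputable def hOct (m : ℕ) (η : ℝ) : ℝ :=
  (Real.Gamma (7 / 2) / (Real.sqrt π * Real.Gamma 3)) *
    ∫ φ in (0 : ℝ)..π,
      (((Real.cos η : ℂ) + Complex.I * ((Real.sin η * Real.cos φ : ℝ) : ℂ)) ^ m).re *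
        (Real.sin φ) ^ 5

/-- Coefficient `α_{k,m}`. -/
noncomputable def alphOct (k m : ℕ) : ℝ :=
  (96 / π ^ 8) * (m + 3) * (2 * k + m + 7) *
    (Nat.choose (k + m + 6) (k + m + 3)) * (Nat.choose (m + 5) m)

/-- Subelliptic heat kernel of the octonionic Hopf fibration, in cylindric coordinates. -/
noncomputable def pOct (t r η : ℝ) : ℝ :=
  ∑' m : ℕ, ∑' k : ℕ,
    alphOct k m * hOct m η * Real.exp (-(4 * ((k * (k + m + 7) + 2 * m : ℕ) : ℝ)) * t) *
      (Real.cos r) ^ m * (jacP k (m + 3)).eval (Real.cos (2 * r))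

/-- Coefficient `β_{k,m}` of the quaternionic heat kernel. -/
noncomputable def betQ (k m : ℕ) : ℝ :=
  (Real.Gamma 4 / (2 * π ^ 6)) * (2 * k + m + 5) * (m + 1) *
    (Nat.choose (k + m + 4) (k + m + 1))

/-- Subelliptic heat kernel of the quaternionic Hopf fibration on `S^11`. -/
noncomputable def pQuat (t r η : ℝ) : ℝ :=
  ∑' m : ℕ, ∑' k : ℕ,
    betQ k m * Real.exp (-(4 * ((k * (k + m + 5) + 2 * m : ℕ) : ℝ)) * t) *
      (Real.sin ((m + 1) * η) / Real.sin η) *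
      (Real.cos r) ^ m * (jacP k (m + 1)).eval (Real.cos (2 * r))

/-- Gegenbauer polynomial `C_m^5` (polynomial extension to all real `x`). -/
noncomputable def geg5 (m : ℕ) (x : ℝ) : ℝ :=
  ∑ j ∈ Finset.range (m / 2 + 1),
    (-1 : ℝ) ^ j * (Nat.factorial (m - j + 4)) /
      ((Nat.factorial 4) * (Nat.factorial j) * (Nat.factorial (m - 2 * j))) * (2 * x) ^ (m - 2 * j)

/-- Radial heat kernel of the round sphere `S^11`, as a function of `cos δ`. -/
noncomputable def qS11 (t x : ℝ) : ℝ :=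
  (Real.Gamma 5 / (2 * π ^ 6)) *
    ∑' m : ℕ, (m + 5) * Real.exp (-((m * (m + 10) : ℕ) : ℝ) * t) * geg5 m x

/-- The kernel `g_t(η,y)` appearing in the integral representation. -/
noncomputable def gInt (t η y : ℝ) : ℝ :=
  (Real.sin η)⁻¹ ^ 3 *
    (Real.cos (η * y / (2 * t)) * (2 * y) * (η - 3 * t * Real.cot η) +
      Real.sin (η * y / (2 * t)) *
        (8 * t ^ 2 * Real.cot η ^ 2 + 4 * t ^ 2 * ((Real.sin η)⁻¹) ^ 2 -
          6 * t * η * Real.cot η + 2 * t + η ^ 2 - y ^ 2))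

/-- Theta-type function `V(t,δ)`. -/
noncomputable def Vtheta (t δ : ℝ) : ℝ :=
  (1 / Real.sqrt (4 * π * t)) * ∑' k : ℤ, Real.exp (-(δ - 2 * k * π) ^ 2 / (4 * t))

/-- The operator `f ↦ -(1/(2π sin δ)) f'`. -/
noncomputable def Dop (f : ℝ → ℝ) : ℝ → ℝ :=
  fun δ => -(1 / (2 * π * Real.sin δ)) * deriv f δ



/-- Bounded-type functions: smooth with all derivatives controlled by `M * N ^ n`. -/
def BT (N M : ℝ) (f : ℝ → ℝ) : Prop :=
  ContDiff ℝ (⊤ : ℕ∞) f ∧ ∀ n x, |iteratedDeriv n f x| ≤ M * N ^ n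

section abstractSeries

variable {ι : Type*} (lam : ι → ℝ) (g h : ι → ℝ → ℝ)

/-- Formal mixed derivative of the `i`-th term. -/
noncomputable def TT (a b c : ℕ) (i : ι) (x : ℝ × ℝ × ℝ) : ℝ :=
  (-lam i) ^ a * Real.exp (-lam i * x.1) * iteratedDeriv b (g i) x.2.1 *
    iteratedDeriv c (h i) x.2.2

/-- The total derivative from three partial derivatives. -/
noncomputable def LL (p q s : ℝ) : ℝ × ℝ × ℝ →L[ℝ] ℝ :=
  p • ContinuousLinearMap.fst ℝ ℝ (ℝ × ℝ) +
  q • (ContinuousLinearMap.fst ℝ ℝ ℝ).comp (ContinuousLinearMap.snd ℝ ℝ (ℝ × ℝ)) +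
  s • (ContinuousLinearMap.snd ℝ ℝ ℝ).comp (ContinuousLinearMap.snd ℝ ℝ (ℝ × ℝ))

lemma LL_apply (p q s : ℝ) (v : ℝ × ℝ × ℝ) : LL p q s v = p * v.1 + q * v.2.1 + s * v.2.2 := by
  simp [LL]

lemma LL_norm (p q s : ℝ) : ‖LL p q s‖ ≤ |p| + |q| + |s| := by
  refine ContinuousLinearMap.opNorm_le_bound _ (by positivity) fun v => ?_
  rw [LL_apply]
  have h1 : |v.1| ≤ ‖v‖ := norm_fst_le v
  have h0 : ‖v.2‖ ≤ ‖v‖ := norm_snd_le v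
  have h2 : |v.2.1| ≤ ‖v‖ := (norm_fst_le v.2).trans h0
  have h3 : |v.2.2| ≤ ‖v‖ := (norm_snd_le v.2).trans h0
  rw [Real.norm_eq_abs]
  calc |p * v.1 + q * v.2.1 + s * v.2.2| ≤ |p * v.1| + |q * v.2.1| + |s * v.2.2| := abs_add_three _ _ _
    _ = |p| * |v.1| + |q| * |v.2.1| + |s| * |v.2.2| := by simp only [abs_mul]
    _ ≤ |p| * ‖v‖ + |q| * ‖v‖ + |s| * ‖v‖ := by gcongr
    _ = _ := by ring

lemma iterDeriv_hasDerivAt {N M : ℝ} {f : ℝ → ℝ} (hf : BT N M f) (n : ℕ) (x : ℝ) :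
    HasDerivAt (iteratedDeriv n f) (iteratedDeriv (n + 1) f x) x := by
  rw [iteratedDeriv_succ]
  exact ((hf.1.differentiable_iteratedDeriv n (by exact_mod_cast ENat.natCast_lt_top n)) x).hasDerivAt

variable {lam g h} {K : ι → ℝ}

section

lemma TT_hasFDerivAt
    (hg : ∀ i, BT (lam i) (K i) (g i)) (hh : ∀ i, BT (lam i) 1 (h i))
    (a b c : ℕ) (i : ι) (x : ℝ × ℝ × ℝ) :
    HasFDerivAt (TT lam g h a b c i)
      (LL (TT lam g h (a+1) b c i x) (TT lam g h a (b+1) c i x) (TT lam g h a b (c+1) i x)) x := by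
  have e1 : HasFDerivAt (fun x : ℝ × ℝ × ℝ => x.1) (ContinuousLinearMap.fst ℝ ℝ (ℝ × ℝ)) x :=
    hasFDerivAt_fst
  have e2 : HasFDerivAt (fun x : ℝ × ℝ × ℝ => x.2.1)
      ((ContinuousLinearMap.fst ℝ ℝ ℝ).comp (ContinuousLinearMap.snd ℝ ℝ (ℝ × ℝ))) x :=
    ((ContinuousLinearMap.fst ℝ ℝ ℝ).comp (ContinuousLinearMap.snd ℝ ℝ (ℝ × ℝ))).hasFDerivAt
  have e3 : HasFDerivAt (fun x : ℝ × ℝ × ℝ => x.2.2)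
      ((ContinuousLinearMap.snd ℝ ℝ ℝ).comp (ContinuousLinearMap.snd ℝ ℝ (ℝ × ℝ))) x :=
    ((ContinuousLinearMap.snd ℝ ℝ ℝ).comp (ContinuousLinearMap.snd ℝ ℝ (ℝ × ℝ))).hasFDerivAt
  have d1 : HasDerivAt (fun s : ℝ => (-lam i) ^ a * Real.exp (-lam i * s))
      ((-lam i) ^ (a+1) * Real.exp (-lam i * x.1)) x.1 := by
    have := (((hasDerivAt_id x.1).const_mul (-lam i)).exp).const_mul ((-lam i) ^ a)
    refine this.congr_deriv ?_
    simp only [id]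
    ring
  have f1 := d1.comp_hasFDerivAt x e1
  have f2 := (iterDeriv_hasDerivAt (hg i) b x.2.1).comp_hasFDerivAt x e2
  have f3 := (iterDeriv_hasDerivAt (hh i) c x.2.2).comp_hasFDerivAt x e3
  have := (f1.mul f2).mul f3
  refine HasFDerivAt.congr_fderiv this ?_
  refine ContinuousLinearMap.ext fun v => ?_
  rw [LL_apply]
  simp [TT]
  ring

lemma TT_bound
    (hlam : ∀ i, 0 ≤ lam i)
    (hg : ∀ i, BT (lam i) (K i) (g i)) (hh : ∀ i, BT (lam i) 1 (h i))
    (a b c : ℕ) (i : ι) (x : ℝ × ℝ × ℝ) {t : ℝ} (hx : t ≤ x.1) :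
    |TT lam g h a b c i x| ≤ K i * Real.exp (-lam i * t) * lam i ^ (a + b + c) := by
  have h1 := (hg i).2 b x.2.1
  have h2 := (hh i).2 c x.2.2
  have hK0 : 0 ≤ K i := by
    have := (hg i).2 0 0
    simp at this
    exact (abs_nonneg _).trans this
  have h3 : Real.exp (-lam i * x.1) ≤ Real.exp (-lam i * t) := by
    apply Real.exp_le_exp.2
    nlinarith [hlam i]
  have hl := hlam i
  unfold TT
  rw [abs_mul, abs_mul, abs_mul, abs_pow, abs_neg, abs_of_nonneg hl, Real.abs_exp]
  calc _ ≤ lam i ^ a * Real.exp (-lam i * t) * (K i * lam i ^ b) * (1 * lam i ^ c) := by gcongr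
    _ = _ := by ring

lemma sum_bound
    (hlam : ∀ i, 0 ≤ lam i)
    (hg : ∀ i, BT (lam i) (K i) (g i)) (hh : ∀ i, BT (lam i) 1 (h i))
    (hK : ∀ t : ℝ, 0 < t → Summable fun i => K i * Real.exp (-lam i * t))
    (n : ℕ) {t : ℝ} (ht : 0 < t) :
    Summable fun i => K i * Real.exp (-lam i * t) * lam i ^ n := by
  have hK0 : ∀ i, 0 ≤ K i := fun i => by
    have := (hg i).2 0 0
    simp at this
    exact (abs_nonneg _).trans this
  have hs := (hK (t/2) (by positivity)).mul_left ((n.factorial : ℝ) / (t/2) ^ n)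
  refine Summable.of_nonneg_of_le (fun i => ?_) (fun i => ?_) hs
  · have := hK0 i; have := hlam i; positivity
  · have h1 := Real.pow_div_factorial_le_exp (x := lam i * (t/2)) (by have := hlam i; positivity) n
    rw [div_le_iff₀ (by positivity), mul_pow] at h1
    have h2 : lam i ^ n ≤ (n.factorial : ℝ) / (t/2) ^ n * Real.exp (lam i * (t/2)) := by
      rw [div_mul_eq_mul_div, le_div_iff₀ (by positivity)]
      linarith
    have h3 : Real.exp (-lam i * t) = Real.exp (-lam i * (t/2)) * Real.exp (-lam i * (t/2)) := by
      rw [← Real.exp_add]; ring_nf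
    have h4 : Real.exp (-lam i * (t/2)) * Real.exp (lam i * (t/2)) = 1 := by
      rw [← Real.exp_add]; ring_nf; simp
    calc _ ≤ K i * Real.exp (-lam i * t) * ((n.factorial : ℝ) / (t/2) ^ n * Real.exp (lam i * (t/2))) := by
            have := hK0 i
            gcongr
      _ = (n.factorial : ℝ) / (t/2) ^ n * (K i * Real.exp (-lam i * (t/2))) *
            (Real.exp (-lam i * (t/2)) * Real.exp (lam i * (t/2))) := by rw [h3]; ring
      _ = _ := by rw [h4, mul_one]

lemma TT_summable
    (hlam : ∀ i, 0 ≤ lam i)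
    (hg : ∀ i, BT (lam i) (K i) (g i)) (hh : ∀ i, BT (lam i) 1 (h i))
    (hK : ∀ t : ℝ, 0 < t → Summable fun i => K i * Real.exp (-lam i * t))
    (a b c : ℕ) (x : ℝ × ℝ × ℝ) (hx : 0 < x.1) :
    Summable fun i => TT lam g h a b c i x := by
  refine Summable.of_norm_bounded (sum_bound hlam hg hh hK (a+b+c) hx) fun i => ?_
  exact TT_bound hlam hg hh a b c i x le_rfl

lemma SS_hasFDerivAt
    (hlam : ∀ i, 0 ≤ lam i)
    (hg : ∀ i, BT (lam i) (K i) (g i)) (hh : ∀ i, BT (lam i) 1 (h i))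
    (hK : ∀ t : ℝ, 0 < t → Summable fun i => K i * Real.exp (-lam i * t))
    (a b c : ℕ) (x : ℝ × ℝ × ℝ) (hx : 0 < x.1) :
    HasFDerivAt (fun y => ∑' i, TT lam g h a b c i y)
      (LL (∑' i, TT lam g h (a+1) b c i x) (∑' i, TT lam g h a (b+1) c i x)
        (∑' i, TT lam g h a b (c+1) i x)) x := by
  have hx2 : 0 < x.1 / 2 := by linarith
  have hu := ((sum_bound hlam hg hh hK (a+b+c+1) hx2).mul_left 3)
  have hmem : x ∈ (Set.Ioi (x.1/2) ×ˢ (Set.univ : Set (ℝ × ℝ)) : Set (ℝ × ℝ × ℝ)) :=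
    ⟨by simp; linarith, trivial⟩
  have key := hasFDerivAt_tsum_of_isPreconnected (𝕜 := ℝ) (f := TT lam g h a b c)
    (f' := fun i x => LL (TT lam g h (a+1) b c i x) (TT lam g h a (b+1) c i x) (TT lam g h a b (c+1) i x))
    (s := Set.Ioi (x.1/2) ×ˢ (Set.univ : Set (ℝ × ℝ))) (x₀ := x) (x := x) hu
    (isOpen_Ioi.prod isOpen_univ)
    (((convex_Ioi _).prod convex_univ).isPreconnected)
    (fun i y _ => TT_hasFDerivAt hg hh a b c i y)
    (fun i y hy => by
      have hy1 : x.1 / 2 ≤ y.1 := le_of_lt hy.1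
      refine (LL_norm _ _ _).trans ?_
      have b1 := TT_bound hlam hg hh (a+1) b c i y hy1
      have b2 := TT_bound hlam hg hh a (b+1) c i y hy1
      have b3 := TT_bound hlam hg hh a b (c+1) i y hy1
      rw [show a + 1 + b + c = a + b + c + 1 by ring] at b1
      rw [show a + (b + 1) + c = a + b + c + 1 by ring] at b2
      rw [show a + b + (c + 1) = a + b + c + 1 by ring] at b3
      linarith)
    hmem (TT_summable hlam hg hh hK a b c x hx) hmem
  refine HasFDerivAt.congr_fderiv key ?_
  have s1 := (TT_summable hlam hg hh hK (a+1) b c x hx).hasSum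
  have s2 := (TT_summable hlam hg hh hK a (b+1) c x hx).hasSum
  have s3 := (TT_summable hlam hg hh hK a b (c+1) x hx).hasSum
  apply HasSum.tsum_eq
  unfold LL
  exact ((s1.smul_const _).add (s2.smul_const _)).add (s3.smul_const _)

lemma SS_contDiffOn
    (hlam : ∀ i, 0 ≤ lam i)
    (hg : ∀ i, BT (lam i) (K i) (g i)) (hh : ∀ i, BT (lam i) 1 (h i))
    (hK : ∀ t : ℝ, 0 < t → Summable fun i => K i * Real.exp (-lam i * t))
    (n : ℕ) : ∀ (a b c : ℕ),
    ContDiffOn ℝ n (fun y => ∑' i, TT lam g h a b c i y) {x : ℝ × ℝ × ℝ | 0 < x.1} := by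
  have ho : IsOpen {x : ℝ × ℝ × ℝ | 0 < x.1} := isOpen_lt continuous_const continuous_fst
  induction n with
  | zero =>
    intro a b c
    have : ContinuousOn (fun y => ∑' i, TT lam g h a b c i y) {x : ℝ × ℝ × ℝ | 0 < x.1} :=
      fun x hx => (SS_hasFDerivAt hlam hg hh hK a b c x hx).continuousAt.continuousWithinAt
    exact contDiffOn_zero.2 this
  | succ n ih =>
    intro a b c
    have : ((n + 1 : ℕ) : WithTop ℕ∞) = (n : WithTop ℕ∞) + 1 := by norm_cast
    rw [this, contDiffOn_succ_iff_hasFDerivWithinAt_of_uniqueDiffOn ho.uniqueDiffOn]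
    refine ⟨fun h => by simp at h, fun x => LL (∑' i, TT lam g h (a+1) b c i x)
      (∑' i, TT lam g h a (b+1) c i x) (∑' i, TT lam g h a b (c+1) i x), ?_,
      fun x hx => (SS_hasFDerivAt hlam hg hh hK a b c x hx).hasFDerivWithinAt⟩
    unfold LL
    exact (((ih (a+1) b c).smul contDiffOn_const).add ((ih a (b+1) c).smul contDiffOn_const)).add
      ((ih a b (c+1)).smul contDiffOn_const)

lemma SS_hasDerivAt1
    (hlam : ∀ i, 0 ≤ lam i)
    (hg : ∀ i, BT (lam i) (K i) (g i)) (hh : ∀ i, BT (lam i) 1 (h i))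
    (hK : ∀ t : ℝ, 0 < t → Summable fun i => K i * Real.exp (-lam i * t))
    (a b c : ℕ) (t r e : ℝ) (ht : 0 < t) :
    HasDerivAt (fun s => ∑' i, TT lam g h a b c i (s, r, e))
      (∑' i, TT lam g h (a+1) b c i (t, r, e)) t := by
  have h1 := SS_hasFDerivAt hlam hg hh hK a b c (t, r, e) ht
  have h2 : HasDerivAt (fun s : ℝ => (s, r, e)) ((1 : ℝ), (0 : ℝ), (0 : ℝ)) t :=
    (hasDerivAt_id t).prodMk (hasDerivAt_const t (r, e))
  have := h1.comp_hasDerivAt t h2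
  exact this.congr_deriv (by simp [LL_apply])

lemma SS_hasDerivAt2
    (hlam : ∀ i, 0 ≤ lam i)
    (hg : ∀ i, BT (lam i) (K i) (g i)) (hh : ∀ i, BT (lam i) 1 (h i))
    (hK : ∀ t : ℝ, 0 < t → Summable fun i => K i * Real.exp (-lam i * t))
    (a b c : ℕ) (t r e : ℝ) (ht : 0 < t) :
    HasDerivAt (fun s => ∑' i, TT lam g h a b c i (t, s, e))
      (∑' i, TT lam g h a (b+1) c i (t, r, e)) r := by
  have h1 := SS_hasFDerivAt hlam hg hh hK a b c (t, r, e) ht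
  have h2 : HasDerivAt (fun s : ℝ => (t, s, e)) ((0 : ℝ), (1 : ℝ), (0 : ℝ)) r :=
    (hasDerivAt_const r t).prodMk ((hasDerivAt_id r).prodMk (hasDerivAt_const r e))
  have := h1.comp_hasDerivAt r h2
  exact this.congr_deriv (by simp [LL_apply])

lemma SS_hasDerivAt3
    (hlam : ∀ i, 0 ≤ lam i)
    (hg : ∀ i, BT (lam i) (K i) (g i)) (hh : ∀ i, BT (lam i) 1 (h i))
    (hK : ∀ t : ℝ, 0 < t → Summable fun i => K i * Real.exp (-lam i * t))
    (a b c : ℕ) (t r e : ℝ) (ht : 0 < t) :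
    HasDerivAt (fun s => ∑' i, TT lam g h a b c i (t, r, s))
      (∑' i, TT lam g h a b (c+1) i (t, r, e)) e := by
  have h1 := SS_hasFDerivAt hlam hg hh hK a b c (t, r, e) ht
  have h2 : HasDerivAt (fun s : ℝ => (t, r, s)) ((0 : ℝ), (0 : ℝ), (1 : ℝ)) e :=
    (hasDerivAt_const e t).prodMk ((hasDerivAt_const e r).prodMk (hasDerivAt_id e))
  have := h1.comp_hasDerivAt e h2
  exact this.congr_deriv (by simp [LL_apply])

end

end abstractSeries

lemma BT.mul {N M N' M' : ℝ} {f g : ℝ → ℝ} (hf : BT N M f) (hg : BT N' M' g)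
    (hM : 0 ≤ M) (hN : 0 ≤ N) : BT (N + N') (M * M') (fun x => f x * g x) := by
  refine ⟨hf.1.mul hg.1, fun n x => ?_⟩
  have hfx : ContDiffAt ℝ n f x := (hf.1.of_le (by exact_mod_cast le_top)).contDiffAt
  have hgx : ContDiffAt ℝ n g x := (hg.1.of_le (by exact_mod_cast le_top)).contDiffAt
  have := iteratedDeriv_fun_mul hfx hgx
  rw [this, add_pow, Finset.mul_sum]
  refine (Finset.abs_sum_le_sum_abs _ _).trans (Finset.sum_le_sum fun i _ => ?_)
  rw [abs_mul, abs_mul, Nat.abs_cast]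
  have h1 := hf.2 i x
  have h2 := hg.2 (n - i) x
  calc _ ≤ (n.choose i : ℝ) * (M * N ^ i) * (M' * N' ^ (n - i)) := by gcongr
    _ = _ := by ring

lemma BT.mono {N M N' M' : ℝ} {f : ℝ → ℝ} (hf : BT N M f) (hN0 : 0 ≤ N) (hM0 : 0 ≤ M)
    (hN : N ≤ N') (hM : M ≤ M') : BT N' M' f :=
  ⟨hf.1, fun n x => (hf.2 n x).trans (by have := hM0.trans hM; gcongr)⟩

lemma BT.const (c : ℝ) : BT 0 |c| (fun _ => c) := by
  refine ⟨contDiff_const, fun n x => ?_⟩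
  rw [iteratedDeriv_const]
  split_ifs with h
  · simp [h]
  · simp [h]

lemma BT.const_mul {N M : ℝ} {f : ℝ → ℝ} (c : ℝ) (hf : BT N M f) :
    BT N (|c| * M) (fun x => c * f x) := by
  have := (BT.const c).mul hf (abs_nonneg c) le_rfl
  simpa using this

lemma BT.cos : BT 1 1 Real.cos :=
  ⟨Real.contDiff_cos, fun n x => by simpa using Real.abs_iteratedDeriv_cos_le_one n x⟩

lemma BT.sin : BT 1 1 Real.sin :=
  ⟨Real.contDiff_sin, fun n x => by simpa using Real.abs_iteratedDeriv_sin_le_one n x⟩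

lemma BT.pow {f : ℝ → ℝ} (hf : BT 1 1 f) (n : ℕ) : BT n 1 (fun x => f x ^ n) := by
  induction n with
  | zero => simpa using BT.const 1
  | succ n ih =>
    have := ih.mul hf zero_le_one (Nat.cast_nonneg n)
    simpa [pow_succ] using this

lemma BT.cos_mul (ν : ℝ) : BT |ν| 1 (fun x => Real.cos (ν * x)) := by
  refine ⟨by fun_prop, fun n x => ?_⟩
  have := iteratedDeriv_comp_const_mul (n := n) (f := Real.cos) Real.contDiff_cos ν
  rw [this]
  simp only [abs_mul, abs_pow, one_mul]
  have h := Real.abs_iteratedDeriv_cos_le_one n (ν * x)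
  calc _ ≤ |ν| ^ n * 1 := by gcongr
    _ = _ := by ring

lemma BT.sum {α : Type*} (s : Finset α) {N : ℝ} {M : α → ℝ} {f : α → ℝ → ℝ}
    (hf : ∀ i ∈ s, BT N (M i) (f i)) : BT N (∑ i ∈ s, M i) (fun x => ∑ i ∈ s, f i x) := by
  refine ⟨ContDiff.sum fun i hi => (hf i hi).1, fun n x => ?_⟩
  rw [iteratedDeriv_fun_sum fun i hi => ((hf i hi).1.of_le (by exact_mod_cast le_top)).contDiffAt,
    Finset.sum_mul]
  exact (Finset.abs_sum_le_sum_abs _ _).trans (Finset.sum_le_sum fun i hi => (hf i hi).2 n x)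

section hpart

/-- The complex number in the integral representation of `hOct`. -/
noncomputable def zc (η φ : ℝ) : ℂ :=
  (Real.cos η : ℂ) + Complex.I * ((Real.sin η * Real.cos φ : ℝ) : ℂ)

/-- Its derivative in `η`. -/
noncomputable def zd (η φ : ℝ) : ℂ :=
  -(Real.sin η : ℂ) + Complex.I * ((Real.cos η * Real.cos φ : ℝ) : ℂ)

/-- Binomial weights. -/
noncomputable def AA (m j : ℕ) (φ : ℝ) : ℝ :=
  ((1 + Real.cos φ) / 2) ^ j * ((1 - Real.cos φ) / 2) ^ (m - j) * (m.choose j : ℝ)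

/-- Normalizing constant. -/
noncomputable def KK : ℝ := Real.Gamma (7 / 2) / (Real.sqrt π * Real.Gamma 3)

lemma AA_cont (m j : ℕ) : Continuous (AA m j) := by unfold AA; fun_prop

lemma AA_nonneg (m j : ℕ) (φ : ℝ) : 0 ≤ AA m j φ := by
  have h1 := Real.cos_le_one φ
  have h2 := Real.neg_one_le_cos φ
  have : 0 ≤ (1 + Real.cos φ) / 2 := by linarith
  have : 0 ≤ (1 - Real.cos φ) / 2 := by linarith
  unfold AA; positivity

lemma AA_sum (m : ℕ) (φ : ℝ) : ∑ j ∈ Finset.range (m + 1), AA m j φ = 1 := by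
  have := add_pow ((1 + Real.cos φ) / 2) ((1 - Real.cos φ) / 2) m
  unfold AA
  rw [← this, ← add_div]
  norm_num

lemma zpow_re (m : ℕ) (η φ : ℝ) : (zc η φ ^ m).re =
    ∑ j ∈ Finset.range (m + 1), AA m j φ * Real.cos ((2 * j - m) * η) := by
  have h1 : zc η φ = (((1 + Real.cos φ) / 2 : ℝ) : ℂ) * Complex.exp (η * Complex.I) +
      (((1 - Real.cos φ) / 2 : ℝ) : ℂ) * Complex.exp (-η * Complex.I) := by
    rw [Complex.exp_mul_I, Complex.exp_mul_I, zc]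
    push_cast
    rw [Complex.cos_neg, Complex.sin_neg]
    ring
  rw [h1, add_pow, Complex.re_sum]
  refine Finset.sum_congr rfl fun j hj => ?_
  have hj' : j ≤ m := Nat.lt_succ_iff.1 (Finset.mem_range.1 hj)
  have h2 : Complex.exp (η * Complex.I) ^ j * Complex.exp (-η * Complex.I) ^ (m - j) =
      Complex.exp (((2 * j - m) * η : ℝ) * Complex.I) := by
    rw [← Complex.exp_nat_mul, ← Complex.exp_nat_mul, ← Complex.exp_add]
    congr 1
    push_cast [Nat.cast_sub hj']
    ring
  have h3 : ∀ p q c : ℝ, ((p : ℂ) * Complex.exp (η * Complex.I)) ^ j *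
      ((q : ℂ) * Complex.exp (-η * Complex.I)) ^ (m - j) * (c : ℂ) =
      ((p ^ j * q ^ (m - j) * c : ℝ) : ℂ) * Complex.exp (((2 * j - m) * η : ℝ) * Complex.I) := by
    intro p q c
    rw [← h2]
    push_cast
    ring
  have := h3 ((1 + Real.cos φ) / 2) ((1 - Real.cos φ) / 2) (m.choose j : ℝ)
  rw [Complex.ofReal_natCast] at this
  rw [this, Complex.re_ofReal_mul, Complex.exp_ofReal_mul_I_re]
  rfl

lemma int_sum_swap (m : ℕ) (c : ℕ → ℝ) :
    KK * ∫ φ in (0 : ℝ)..π, (∑ j ∈ Finset.range (m + 1), AA m j φ * c j) * Real.sin φ ^ 5 =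
    ∑ j ∈ Finset.range (m + 1), (KK * ∫ φ in (0 : ℝ)..π, AA m j φ * Real.sin φ ^ 5) * c j := by
  have : ∀ φ, (∑ j ∈ Finset.range (m + 1), AA m j φ * c j) * Real.sin φ ^ 5 =
      ∑ j ∈ Finset.range (m + 1), (AA m j φ * Real.sin φ ^ 5) * c j := by
    intro φ
    rw [Finset.sum_mul]
    exact Finset.sum_congr rfl fun j _ => by ring
  simp_rw [this]
  rw [intervalIntegral.integral_finsetSum, Finset.mul_sum]
  · refine Finset.sum_congr rfl fun j _ => ?_
    rw [intervalIntegral.integral_mul_const]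
    ring
  · intro j _
    apply Continuous.intervalIntegrable
    have := AA_cont m j
    fun_prop

lemma deriv_swap (m : ℕ) (c c' : ℕ → ℝ → ℝ) (B B' : ℝ → ℝ → ℝ)
    (hB : ∀ η φ, B η φ = ∑ j ∈ Finset.range (m + 1), AA m j φ * c j η)
    (hc : ∀ j η, HasDerivAt (c j) (c' j η) η)
    (hB' : ∀ η φ, HasDerivAt (fun e => B e φ) (B' η φ) η) :
    (∀ η φ, B' η φ = ∑ j ∈ Finset.range (m + 1), AA m j φ * c' j η) ∧
    ∀ η, HasDerivAt (fun e => KK * ∫ φ in (0 : ℝ)..π, B e φ * Real.sin φ ^ 5)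
      (KK * ∫ φ in (0 : ℝ)..π, B' η φ * Real.sin φ ^ 5) η := by
  have h1 : ∀ η φ, B' η φ = ∑ j ∈ Finset.range (m + 1), AA m j φ * c' j η := by
    intro η φ
    refine (hB' η φ).unique ?_
    simp_rw [hB]
    exact HasDerivAt.fun_sum fun j _ => (hc j η).const_mul _
  refine ⟨h1, fun η => ?_⟩
  simp_rw [h1, hB]
  rw [int_sum_swap m (fun j => c' j η)]
  have : (fun e => KK * ∫ φ in (0 : ℝ)..π,
      (∑ j ∈ Finset.range (m + 1), AA m j φ * c j e) * Real.sin φ ^ 5) = fun e =>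
      ∑ j ∈ Finset.range (m + 1), (KK * ∫ φ in (0 : ℝ)..π, AA m j φ * Real.sin φ ^ 5) * c j e := by
    funext e
    exact int_sum_swap m (fun j => c j e)
  rw [this]
  exact HasDerivAt.fun_sum fun j _ => (hc j η).const_mul _

lemma KK_norm : KK * ∫ φ in (0 : ℝ)..π, Real.sin φ ^ 5 = 1 := by
  have h1 : Real.Gamma (7 / 2) = 15 / 8 * Real.sqrt π := by
    have e1 : (7 / 2 : ℝ) = 5 / 2 + 1 := by norm_num
    have e2 : (5 / 2 : ℝ) = 3 / 2 + 1 := by norm_num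
    have e3 : (3 / 2 : ℝ) = 1 / 2 + 1 := by norm_num
    rw [e1, Real.Gamma_add_one (by norm_num), e2, Real.Gamma_add_one (by norm_num), e3,
      Real.Gamma_add_one (by norm_num), Real.Gamma_one_half_eq]
    ring
  have h2 : Real.Gamma 3 = 2 := by
    have := Real.Gamma_nat_eq_factorial 2
    rw [show (3 : ℝ) = ((2 : ℕ) : ℝ) + 1 by norm_num, this]
    norm_num [Nat.factorial]
  have h3 : ∫ φ in (0 : ℝ)..π, Real.sin φ ^ 5 = 16 / 15 := by
    have := integral_sin_pow_odd 2
    norm_num [Finset.prod_range_succ] at this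
    exact this
  have hp : Real.sqrt π ≠ 0 := (Real.sqrt_pos.2 Real.pi_pos).ne'
  rw [KK, h1, h2, h3]
  field_simp
  norm_num

lemma KK_nonneg : 0 ≤ KK := by unfold KK; positivity

lemma hOct_def' (m : ℕ) : hOct m = fun η => KK * ∫ φ in (0 : ℝ)..π, (zc η φ ^ m).re * Real.sin φ ^ 5 := rfl

lemma hOct_BT (m : ℕ) : BT m 1 (hOct m) := by
  have e : hOct m = fun η => ∑ j ∈ Finset.range (m + 1),
      (KK * ∫ φ in (0 : ℝ)..π, AA m j φ * Real.sin φ ^ 5) * Real.cos ((2 * j - m) * η) := by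
    funext η
    rw [hOct_def']
    simp only [zpow_re]
    exact int_sum_swap m (fun j => Real.cos ((2 * j - m) * η))
  have hW : ∀ j, 0 ≤ KK * ∫ φ in (0 : ℝ)..π, AA m j φ * Real.sin φ ^ 5 := by
    intro j
    refine mul_nonneg KK_nonneg (intervalIntegral.integral_nonneg Real.pi_pos.le fun φ hφ => ?_)
    have := Real.sin_nonneg_of_mem_Icc hφ
    have := AA_nonneg m j φ
    positivity
  have hs := int_sum_swap m (fun _ => 1)
  simp only [mul_one, AA_sum, one_mul] at hs
  rw [KK_norm] at hs
  have := BT.sum (Finset.range (m + 1)) (N := m)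
    (M := fun j => KK * ∫ φ in (0 : ℝ)..π, AA m j φ * Real.sin φ ^ 5)
    (f := fun j η => (KK * ∫ φ in (0 : ℝ)..π, AA m j φ * Real.sin φ ^ 5) * Real.cos ((2 * j - m) * η))
    (fun j hj => by
      have hj' : (j : ℝ) ≤ m := by exact_mod_cast Nat.lt_succ_iff.1 (Finset.mem_range.1 hj)
      have hj0 : (0 : ℝ) ≤ j := Nat.cast_nonneg j
      have h1 := ((BT.cos_mul (2 * j - m : ℝ)).mono (abs_nonneg _) zero_le_one
        (N' := m) (by rw [abs_le]; constructor <;> linarith) le_rfl).const_mul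
        (KK * ∫ φ in (0 : ℝ)..π, AA m j φ * Real.sin φ ^ 5)
      rw [abs_of_nonneg (hW j), mul_one] at h1
      exact h1)
  rw [← hs] at this
  rw [e]
  exact this

lemma zc_hasDerivAt (η φ : ℝ) : HasDerivAt (fun e => zc e φ) (zd η φ) η := by
  have h1 := (Real.hasDerivAt_cos η).ofReal_comp
  have h2 := (((Real.hasDerivAt_sin η).mul_const (Real.cos φ)).ofReal_comp).const_mul Complex.I
  refine (h1.add h2).congr_deriv ?_
  simp [zd]

lemma zd_hasDerivAt (η φ : ℝ) : HasDerivAt (fun e => zd e φ) (-zc η φ) η := by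
  have h1 := (Real.hasDerivAt_sin η).ofReal_comp.neg
  have h2 := (((Real.hasDerivAt_cos η).mul_const (Real.cos φ)).ofReal_comp).const_mul Complex.I
  refine (h1.add h2).congr_deriv ?_
  simp [zc]
  ring

lemma zc_hasDerivAt_phi (η φ : ℝ) :
    HasDerivAt (fun f => zc η f) (-Complex.I * (Real.sin η * Real.sin φ : ℝ)) φ := by
  have h2 := (((Real.hasDerivAt_cos φ).const_mul (Real.sin η)).ofReal_comp).const_mul Complex.I
  refine (h2.const_add (Real.cos η : ℂ)).congr_deriv ?_
  push_cast
  ring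

lemma re_hasDerivAt {f : ℝ → ℂ} {f' : ℂ} {x : ℝ} (h : HasDerivAt f f' x) :
    HasDerivAt (fun y => (f y).re) f'.re x := by
  have := Complex.reCLM.hasFDerivAt.comp_hasDerivAt x h
  exact this

lemma hOct_ode (m : ℕ) (η : ℝ) (hη : Real.sin η ≠ 0) :
    iteratedDeriv 2 (hOct m) η + 6 * Real.cot η * iteratedDeriv 1 (hOct m) η
      = -(m * (m + 6) : ℝ) * hOct m η := by
  let B1 : ℝ → ℝ → ℝ := fun η φ => ((m : ℂ) * zc η φ ^ (m - 1) * zd η φ).re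
  let B2 : ℝ → ℝ → ℝ := fun η φ =>
    ((m : ℂ) * (((m - 1 : ℕ) : ℂ) * zc η φ ^ (m - 1 - 1) * zd η φ) * zd η φ
      + (m : ℂ) * zc η φ ^ (m - 1) * (-zc η φ)).re
  have hz1 : ∀ η φ, HasDerivAt (fun e => (zc e φ ^ m).re) (B1 η φ) η := fun η φ =>
    re_hasDerivAt ((zc_hasDerivAt η φ).fun_pow m)
  have hz2 : ∀ η φ, HasDerivAt (fun e => B1 e φ) (B2 η φ) η := fun η φ =>
    re_hasDerivAt ((((zc_hasDerivAt η φ).fun_pow (m - 1)).const_mul (m : ℂ)).fun_mul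
      (zd_hasDerivAt η φ))
  have hc1 : ∀ (j : ℕ) (η : ℝ), HasDerivAt (fun η => Real.cos ((2 * j - m) * η))
      (-Real.sin ((2 * j - m) * η) * (2 * j - m)) η := fun j η =>
    (((hasDerivAt_id η).const_mul (2 * j - m : ℝ)).cos).congr_deriv (by simp)
  have hc2 : ∀ (j : ℕ) (η : ℝ), HasDerivAt (fun η => -Real.sin ((2 * j - m) * η) * (2 * j - m : ℝ))
      (-(Real.cos ((2 * j - m) * η) * (2 * j - m)) * (2 * j - m)) η := fun j η =>
    ((((hasDerivAt_id η).const_mul (2 * j - m : ℝ)).sin.neg).mul_const _).congr_deriv (by simp)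
  obtain ⟨b1, d1⟩ := deriv_swap m _ _ _ B1 (zpow_re m) hc1 hz1
  obtain ⟨b2, d2⟩ := deriv_swap m _ _ _ B2 b1 hc2 hz2
  have i1 : deriv (hOct m) = fun η => KK * ∫ φ in (0 : ℝ)..π, B1 η φ * Real.sin φ ^ 5 := by
    funext e
    rw [hOct_def']
    exact (d1 e).deriv
  have i2 : iteratedDeriv 2 (hOct m) η = KK * ∫ φ in (0 : ℝ)..π, B2 η φ * Real.sin φ ^ 5 := by
    rw [iteratedDeriv_succ, iteratedDeriv_one, i1]
    exact (d2 η).deriv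
  rw [i2, iteratedDeriv_one, i1, hOct_def']
  have cz : Continuous fun φ => zc η φ := by unfold zc; fun_prop
  have cd : Continuous fun φ => zd η φ := by unfold zd; fun_prop
  have k0 : Continuous fun φ => (zc η φ ^ m).re * Real.sin φ ^ 5 := by
    have := Complex.continuous_re.comp (cz.pow m)
    exact this.mul (by fun_prop)
  have k1 : Continuous fun φ => B1 η φ * Real.sin φ ^ 5 := by
    have : Continuous fun φ => B1 η φ := Complex.continuous_re.comp (by fun_prop)
    exact this.mul (by fun_prop)
  have k2 : Continuous fun φ => B2 η φ * Real.sin φ ^ 5 := by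
    have : Continuous fun φ => B2 η φ := Complex.continuous_re.comp (by fun_prop)
    exact this.mul (by fun_prop)
  have key : ∫ φ in (0 : ℝ)..π, (B2 η φ * Real.sin φ ^ 5 +
      6 * Real.cot η * (B1 η φ * Real.sin φ ^ 5) +
      (m * (m + 6) : ℝ) * ((zc η φ ^ m).re * Real.sin φ ^ 5)) = 0 := by
    let G : ℝ → ℝ := fun φ => ((m : ℂ) * zc η φ ^ (m - 1) *
      ((Real.sin φ ^ 6 : ℝ) : ℂ) * (Complex.I / (Real.sin η : ℂ))).re
    have hG : ∀ φ, HasDerivAt G (B2 η φ * Real.sin φ ^ 5 +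
      6 * Real.cot η * (B1 η φ * Real.sin φ ^ 5) +
      (m * (m + 6) : ℝ) * ((zc η φ ^ m).re * Real.sin φ ^ 5)) φ := by
      intro φ
      have h1 := re_hasDerivAt ((((((zc_hasDerivAt_phi η φ).fun_pow (m - 1)).const_mul (m : ℂ)).fun_mul
        (((Real.hasDerivAt_sin φ).fun_pow 6).ofReal_comp)).mul_const (Complex.I / (Real.sin η : ℂ))))
      refine h1.congr_deriv ?_
      have hcast : ∀ (w : ℂ) (x : ℝ), w.re * x = (w * (x : ℂ)).re := fun w x => by
        rw [Complex.re_mul_ofReal]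
      have hcast' : ∀ (w : ℂ) (x : ℝ), x * w.re = ((x : ℂ) * w).re := fun w x => by
        rw [Complex.re_ofReal_mul]
      simp only [B1, B2, hcast, hcast', ← Complex.add_re]
      congr 1
      have hsη : (Real.sin η : ℂ) ≠ 0 := by exact_mod_cast hη
      have p1 : (m : ℂ) * zc η φ ^ (m - 1) * zc η φ = m * zc η φ ^ m := by
        rcases m with _ | m
        · simp
        · rw [pow_succ]; simp; ring
      have p2 : (m : ℂ) * ((m - 1 : ℕ) : ℂ) * zc η φ ^ (m - 1 - 1) * zc η φ ^ 2
          = m * (m - 1) * zc η φ ^ m := by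
        rcases m with _ | _ | m
        · simp
        · simp
        · rw [show m + 1 + 1 = m + 2 from rfl, pow_add]; simp; ring
      have p3 : zc η φ ^ 2 + zd η φ ^ 2 = (Real.sin φ : ℂ) ^ 2 := by
        have a1 : (Real.sin φ : ℂ) ^ 2 = 1 - (Real.cos φ : ℂ) ^ 2 := by
          rw [eq_sub_iff_add_eq]; exact_mod_cast Real.sin_sq_add_cos_sq φ
        have a2 : (Real.sin η : ℂ) ^ 2 + (Real.cos η : ℂ) ^ 2 = 1 := by
          exact_mod_cast Real.sin_sq_add_cos_sq η
        rw [a1]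
        unfold zc zd
        rw [Complex.ofReal_mul, Complex.ofReal_mul]
        linear_combination (1 + (Real.cos φ : ℂ) ^ 2 * Complex.I ^ 2) * a2
          + (Real.cos φ : ℂ) ^ 2 * Complex.I_sq
      have p4 : (Real.sin η : ℂ) * zc η φ + (Real.cos η : ℂ) * zd η φ = Complex.I * Real.cos φ := by
        have a2 : (Real.sin η : ℂ) ^ 2 + (Real.cos η : ℂ) ^ 2 = 1 := by
          exact_mod_cast Real.sin_sq_add_cos_sq η
        unfold zc zd
        rw [Complex.ofReal_mul, Complex.ofReal_mul]
        linear_combination (Complex.I * Real.cos φ) * a2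
      rw [Real.cot_eq_cos_div_sin]
      push_cast [-Complex.ofReal_sin, -Complex.ofReal_cos]
      generalize zc η φ = z at *
      generalize zd η φ = w at *
      generalize (m - 1 : ℕ) = n1 at *
      generalize z ^ m = Z at *
      generalize z ^ (n1 - 1) = Z2 at *
      generalize z ^ n1 = Z1 at *
      generalize (Real.sin η : ℂ) = s at *
      generalize (Real.cos η : ℂ) = c at *
      generalize (Real.sin φ : ℂ) = S at *
      generalize (Real.cos φ : ℂ) = C at *
      generalize (m : ℂ) = M at *
      generalize (n1 : ℂ) = N at *
      have p4' : z + c / s * w = Complex.I * C / s := by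
        field_simp
        linear_combination p4
      have p5 : s * s⁻¹ = 1 := mul_inv_cancel₀ hsη
      linear_combination (-(M * N * Z2 * S ^ 7 * s * s⁻¹)) * Complex.I_sq
        + (M * N * Z2 * S ^ 7) * p5 - (M * N * Z2 * S ^ 5) * p3 + S ^ 5 * p2
        - (6 * M * Z1 * S ^ 5) * p4' + 7 * S ^ 5 * p1
    rw [intervalIntegral.integral_eq_sub_of_hasDerivAt (fun φ _ => hG φ)]
    · simp [G]
    · apply Continuous.intervalIntegrable
      fun_prop
  rw [intervalIntegral.integral_add, intervalIntegral.integral_add,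
    intervalIntegral.integral_const_mul, intervalIntegral.integral_const_mul] at key
  · linear_combination KK * key
  all_goals apply Continuous.intervalIntegrable; fun_prop

end hpart

section jacobi

open Polynomial

lemma iter_one_sub (n j : ℕ) : derivative^[j] ((1 - X : ℝ[X]) ^ n) =
    (-1) ^ j * ((n.descFactorial j : ℕ) : ℝ[X]) * (1 - X) ^ (n - j) := by
  have := iterate_derivative_comp_one_sub_X (X ^ n : ℝ[X]) j
  rw [iterate_derivative_X_pow_eq_natCast_mul] at this
  simpa [mul_assoc] using this

lemma iter_one_add (n j : ℕ) : derivative^[j] ((1 + X : ℝ[X]) ^ n) =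
    ((n.descFactorial j : ℕ) : ℝ[X]) * (1 + X) ^ (n - j) := by
  have := iterate_derivative_X_add_pow n j (1 : ℝ)
  simpa [add_comm] using this

/-- The polynomial quotient in the Rodrigues formula. -/
noncomputable def SJ (k b : ℕ) : ℝ[X] :=
  ∑ s ∈ Finset.range (k + 1), (-1) ^ (k - s) *
    ((k.factorial * ((k + 3).choose (k - s) * (b + k).choose s) : ℕ) : ℝ[X]) *
    ((1 - X) ^ s * (1 + X) ^ (k - s))

lemma choose_aux (k b s : ℕ) (hs : s ≤ k) :
    k.choose s * ((k + 3).descFactorial (k - s) * (b + k).descFactorial s) =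
    k.factorial * ((k + 3).choose (k - s) * (b + k).choose s) := by
  rw [Nat.descFactorial_eq_factorial_mul_choose, Nat.descFactorial_eq_factorial_mul_choose,
    ← Nat.choose_mul_factorial_mul_factorial hs]
  ring

lemma rodrigues (k b : ℕ) :
    derivative^[k] ((1 - X : ℝ[X]) ^ (k + 3) * (1 + X) ^ (b + k)) =
      ((1 - X) ^ 3 * (1 + X) ^ b) * SJ k b := by
  rw [iterate_derivative_mul, SJ, Finset.mul_sum]
  refine Finset.sum_congr rfl fun s hs => ?_
  have hs' : s ≤ k := Nat.lt_succ_iff.1 (Finset.mem_range.1 hs)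
  rw [iter_one_sub, iter_one_add, ← choose_aux k b s hs', show k + 3 - (k - s) = 3 + s by omega,
    show b + k - s = b + (k - s) by omega, pow_add, pow_add, nsmul_eq_mul]
  push_cast
  ring

lemma w_ne (b : ℕ) : ((1 - X : ℝ[X]) ^ 3 * (1 + X) ^ b) ≠ 0 := by
  have h1 : (1 - X : ℝ[X]) ≠ 0 := by
    intro h
    have := congrArg (eval 0) h
    simp at this
  have h2 : (1 + X : ℝ[X]) ≠ 0 := by
    intro h
    have := congrArg (eval 0) h
    simp at this
  exact mul_ne_zero (pow_ne_zero _ h1) (pow_ne_zero _ h2)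

lemma jacP_eq (k b : ℕ) :
    jacP k b = C ((-1 : ℝ) ^ k / (2 ^ k * (Nat.factorial k : ℝ))) * SJ k b := by
  rw [jacP, rodrigues, mul_div_cancel_left₀ _ (w_ne b)]

lemma iter_quad (Q : ℝ[X]) (n : ℕ) :
    derivative^[n + 1] ((1 - X ^ 2) * derivative Q) =
      (1 - X ^ 2) * derivative^[n + 2] Q - 2 * ((n : ℝ[X]) + 1) * X * derivative^[n + 1] Q
        - (n : ℝ[X]) * ((n : ℝ[X]) + 1) * derivative^[n] Q := by
  induction n with
  | zero => simp; ring
  | succ n ih =>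
    rw [Function.iterate_succ_apply', ih]
    simp only [Function.iterate_succ_apply', derivative_sub, derivative_mul, derivative_X,
      derivative_X_pow, derivative_add, derivative_natCast, derivative_one, derivative_ofNat]
    push_cast
    simp
    rw [show (C 2 : ℝ[X]) = 2 from map_ofNat C 2]
    ring

lemma iter_lin (Q : ℝ[X]) (a d : ℝ) (n : ℕ) :
    derivative^[n + 1] ((C a + C d * X) * Q) =
      (C a + C d * X) * derivative^[n + 1] Q + ((n : ℝ[X]) + 1) * C d * derivative^[n] Q := by
  induction n with
  | zero => simp; ring
  | succ n ih =>
    rw [Function.iterate_succ_apply', ih]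
    simp only [Function.iterate_succ_apply', derivative_mul, derivative_X,
      derivative_add, derivative_natCast, derivative_one, derivative_C]
    push_cast
    ring

lemma quad_w (p q : ℕ) : (1 - X ^ 2 : ℝ[X]) * derivative ((1 - X) ^ p * (1 + X) ^ q) =
    (C ((q : ℝ) - p) + C (-(p + q) : ℝ) * X) * ((1 - X) ^ p * (1 + X) ^ q) := by
  have h1 : (1 - X : ℝ[X]) * derivative ((1 - X) ^ p) = -(p : ℝ[X]) * (1 - X) ^ p := by
    rcases p with _ | p
    · simp
    · rw [derivative_pow]; simp; ring
  have h2 : (1 + X : ℝ[X]) * derivative ((1 + X) ^ q) = (q : ℝ[X]) * (1 + X) ^ q := by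
    rcases q with _ | q
    · simp
    · rw [derivative_pow]; simp; ring
  rw [derivative_mul]
  simp only [C_sub, C_neg, C_add, C_eq_natCast]
  linear_combination (1 + X) * (1 + X) ^ q * h1 + (1 - X) * (1 - X) ^ p * h2

lemma SJ_ode (k b : ℕ) :
    (1 - X ^ 2) * derivative (derivative (SJ k b)) +
      (((b : ℝ[X]) - 3) - ((b : ℝ[X]) + 5) * X) * derivative (SJ k b) +
      ((k : ℝ[X]) * ((k : ℝ[X]) + (b : ℝ[X]) + 4)) * SJ k b = 0 := by
  have e1 := congrArg (fun P => derivative^[k + 1] P) (quad_w (k + 3) (b + k))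
  simp only [iter_quad, iter_lin] at e1
  rw [Function.iterate_succ_apply', Function.iterate_succ_apply', rodrigues] at e1
  have e2 := quad_w 3 b
  generalize hw : ((1 - X : ℝ[X]) ^ 3 * (1 + X) ^ b) = w at *
  have hw0 : w ≠ 0 := by rw [← hw]; exact w_ne b
  have e3 := congrArg derivative e2
  simp only [C_sub, C_neg, C_add, C_eq_natCast, derivative_mul, derivative_add, derivative_sub, derivative_neg,
    derivative_X_pow, derivative_one, derivative_X, derivative_natCast] at e1 e2 e3
  push_cast at e1 e2 e3
  simp at e1 e2 e3
  generalize derivative (derivative w) = w2 at *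
  generalize derivative w = w1 at *
  generalize derivative (derivative (SJ k b)) = S2 at *
  generalize derivative (SJ k b) = S1 at *
  generalize SJ k b = S at *
  apply mul_left_cancel₀ hw0
  linear_combination e1 - S * e3 - 2 * S1 * e2

lemma SJ_eval (k b : ℕ) (r : ℝ) : (jacP k b).eval (Real.cos (2 * r)) =
    ∑ s ∈ Finset.range (k + 1), (-1) ^ k * (-1) ^ (k - s) *
      (((k + 3).choose (k - s) * (b + k).choose s : ℕ) : ℝ) *
      (Real.sin r ^ (2 * s) * Real.cos r ^ (2 * (k - s))) := by
  rw [jacP_eq, SJ, eval_mul, eval_C, eval_finsetSum, Finset.mul_sum]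
  refine Finset.sum_congr rfl fun s hs => ?_
  have hs' : s ≤ k := Nat.lt_succ_iff.1 (Finset.mem_range.1 hs)
  have h1 : 1 - Real.cos (2 * r) = 2 * Real.sin r ^ 2 := by
    rw [Real.cos_two_mul]; linarith [Real.sin_sq_add_cos_sq r]
  have h2 : 1 + Real.cos (2 * r) = 2 * Real.cos r ^ 2 := by
    rw [Real.cos_two_mul]; ring
  simp only [eval_mul, eval_pow, eval_sub, eval_add, eval_one, eval_X, eval_natCast, eval_neg, h1, h2]
  rw [mul_pow, mul_pow, ← pow_mul, ← pow_mul]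
  have h3 : (2 : ℝ) ^ k = 2 ^ s * 2 ^ (k - s) := by rw [← pow_add]; congr 1; omega
  rw [h3]
  have : (k.factorial : ℝ) ≠ 0 := by positivity
  push_cast
  field_simp

/-- Radial part. -/
noncomputable def GG (k m : ℕ) (r : ℝ) : ℝ :=
  Real.cos r ^ m * (jacP k (m + 3)).eval (Real.cos (2 * r))

lemma GG_BT (k m : ℕ) : BT (m + 2 * k) ((2 * k + m + 6).choose k) (GG k m) := by
  have e : GG k m = fun r => ∑ s ∈ Finset.range (k + 1), ((-1) ^ k * (-1) ^ (k - s) *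
      (((k + 3).choose (k - s) * (m + 3 + k).choose s : ℕ) : ℝ)) *
      (Real.cos r ^ m * (Real.sin r ^ (2 * s) * Real.cos r ^ (2 * (k - s)))) := by
    funext r
    rw [GG, SJ_eval, Finset.mul_sum]
    exact Finset.sum_congr rfl fun s _ => by ring
  have hsum : (((2 * k + m + 6).choose k : ℕ) : ℝ) = ∑ s ∈ Finset.range (k + 1),
      (((k + 3).choose (k - s) * (m + 3 + k).choose s : ℕ) : ℝ) := by
    rw [show 2 * k + m + 6 = (m + 3 + k) + (k + 3) by ring, Nat.add_choose_eq,
      Finset.Nat.sum_antidiagonal_eq_sum_range_succ_mk]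
    push_cast
    exact Finset.sum_congr rfl fun s _ => by ring
  rw [e, hsum]
  refine BT.sum _ fun s hs => ?_
  have hs' : s ≤ k := Nat.lt_succ_iff.1 (Finset.mem_range.1 hs)
  have b1 := (BT.cos.pow m).mul ((BT.sin.pow (2 * s)).mul (BT.cos.pow (2 * (k - s))) zero_le_one
    (Nat.cast_nonneg _)) zero_le_one (Nat.cast_nonneg _)
  have b2 := b1.const_mul ((-1) ^ k * (-1) ^ (k - s) *
      (((k + 3).choose (k - s) * (m + 3 + k).choose s : ℕ) : ℝ))
  simp only [abs_mul, abs_pow, abs_neg, abs_one, one_pow, one_mul, mul_one, Nat.abs_cast] at b2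
  convert! b2 using 1
  push_cast [Nat.cast_sub hs']
  ring

lemma GG_ode (k m : ℕ) (r : ℝ) (hs : Real.sin r ≠ 0) (hc : Real.cos r ≠ 0) :
    iteratedDeriv 2 (GG k m) r + (7 * Real.cot r - 7 * Real.tan r) * iteratedDeriv 1 (GG k m) r
      = Real.tan r ^ 2 * (m * (m + 6)) * GG k m r
        - 4 * (k * (k + m + 7) + 2 * m) * GG k m r := by
  set P := jacP k (m + 3) with hP
  have ode : ∀ x : ℝ, (1 - x ^ 2) * P.derivative.derivative.eval x +
      (m - (m + 8) * x) * P.derivative.eval x + k * (k + m + 7) * P.eval x = 0 := by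
    intro x
    have := congrArg (eval x) (SJ_ode k (m + 3))
    simp only [eval_add, eval_mul, eval_sub, eval_one, eval_pow, eval_X, eval_natCast, eval_ofNat,
      eval_zero, Nat.cast_add, Nat.cast_ofNat] at this
    rw [hP, jacP_eq]
    simp only [derivative_C_mul, eval_mul, eval_C]
    linear_combination ((-1 : ℝ) ^ k / (2 ^ k * (Nat.factorial k : ℝ))) * this
  have hcomp : ∀ (p : ℝ[X]) (x : ℝ), HasDerivAt (fun r => p.eval (Real.cos (2 * r)))
      (p.derivative.eval (Real.cos (2 * x)) * (-Real.sin (2 * x) * 2)) x := by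
    intro p x
    have h1 : HasDerivAt (fun r => Real.cos (2 * r)) (-Real.sin (2 * x) * 2) x :=
      (((hasDerivAt_id x).const_mul 2).cos).congr_deriv (by simp)
    exact (p.hasDerivAt (Real.cos (2 * x))).comp x h1
  have hsin2 : ∀ x : ℝ, HasDerivAt (fun r => -Real.sin (2 * r) * 2) (-(Real.cos (2 * x) * 2) * 2) x :=
    fun x => ((((hasDerivAt_id x).const_mul 2).sin.neg).mul_const 2).congr_deriv (by simp)
  have d1 : ∀ x, HasDerivAt (GG k m) (m * Real.cos x ^ (m - 1) * (-Real.sin x) * P.eval (Real.cos (2 * x))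
      + Real.cos x ^ m * (P.derivative.eval (Real.cos (2 * x)) * (-Real.sin (2 * x) * 2))) x := fun x =>
    ((Real.hasDerivAt_cos x).fun_pow m).fun_mul (hcomp P x)
  have d2 := ((((((Real.hasDerivAt_cos r).fun_pow (m - 1)).const_mul (m : ℝ)).fun_mul
    (Real.hasDerivAt_sin r).fun_neg).fun_mul (hcomp P r)).fun_add
    (((Real.hasDerivAt_cos r).fun_pow m).fun_mul ((hcomp P.derivative r).fun_mul (hsin2 r))))
  have i1 : deriv (GG k m) = fun x => _ := funext fun x => (d1 x).deriv
  have i2 : iteratedDeriv 2 (GG k m) r = deriv (deriv (GG k m)) r := by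
    rw [iteratedDeriv_succ, iteratedDeriv_one]
  have i3 := d2.deriv
  rw [← i1] at i3
  rw [i2, i3, iteratedDeriv_one, i1, GG, ← hP]
  have o := ode (Real.cos (2 * r))
  have p1 : (m : ℝ) * Real.cos r ^ (m - 1) = m * Real.cos r ^ m / Real.cos r := by
    rcases m with _ | m
    · simp
    · rw [pow_succ]; field_simp; simp
  have p2 : (m : ℝ) * (((m - 1 : ℕ) : ℝ) * Real.cos r ^ (m - 1 - 1)) =
      m * (m - 1) * Real.cos r ^ m / Real.cos r ^ 2 := by
    rcases m with _ | _ | m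
    · simp
    · simp
    · rw [show m + 1 + 1 = m + 2 from rfl, pow_add]; field_simp; simp; left; ring
  have sc : Real.sin r ^ 2 = 1 - Real.cos r ^ 2 := Real.sin_sq r
  rw [Real.cot_eq_cos_div_sin, Real.tan_eq_sin_div_cos]
  beta_reduce
  rw [Real.sin_two_mul]
  have o' := o
  generalize eval (Real.cos (2 * r)) P = P0 at *
  generalize eval (Real.cos (2 * r)) (derivative P) = P1 at *
  generalize eval (Real.cos (2 * r)) (derivative (derivative P)) = P2 at *
  rw [Real.cos_two_mul] at *
  generalize Real.cos r ^ m = u at *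
  generalize Real.cos r ^ (m - 1) = u1 at *
  generalize Real.cos r ^ (m - 1 - 1) = u2 at *
  generalize ((m - 1 : ℕ) : ℝ) = n at *
  generalize (m : ℝ) = M at *
  generalize Real.cos r = c at *
  generalize Real.sin r = s at *
  obtain ⟨v, rfl⟩ : ∃ v, u = v * c ^ 2 := ⟨u / c ^ 2, by field_simp⟩
  have q1 : M * u1 = M * v * c := by rw [p1]; field_simp
  have q2 : M * (n * u2) = M * (M - 1) * v := by rw [p2]; field_simp
  have hD : (7 * (c / s) - 7 * (s / c)) * s * c = 7 * c ^ 2 - 7 * s ^ 2 := by field_simp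
  have hT : (s / c) ^ 2 * c ^ 2 = s ^ 2 := by field_simp
  generalize (s / c) ^ 2 = T at *
  generalize 7 * (c / s) - 7 * (s / c) = D at *
  clear p1 p2 d2 i1 i2 i3 d1 hsin2 hcomp ode
  linear_combination s ^ 2 * P0 * q2 + (-c * P0 + 8 * s ^ 2 * c * P1 - D * s * P0) * q1
    - (M * v * P0 + 4 * v * c ^ 2 * P1) * hD - M * (M + 6) * v * P0 * hT + 4 * v * c ^ 2 * o
    + (8 * M * c ^ 2 * P1 * v + 28 * c ^ 2 * P1 * v + 16 * c ^ 4 * v * P2) * sc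

end jacobi

section assembly

lemma gauss_summable (q a : ℝ) (hq : 0 < q) (ha : 0 < a) :
    Summable fun k : ℕ => q ^ k * Real.exp (-(a * (k : ℝ) ^ 2)) := by
  have hs : Summable fun k : ℕ => Real.exp ((Real.log q + 1) ^ 2 / (4 * a)) *
      Real.exp (-(k : ℝ)) := by
    refine Summable.mul_left _ ?_
    have := Real.summable_exp_neg_nat
    exact this
  refine Summable.of_nonneg_of_le (fun k => by positivity) (fun k => ?_) hs
  have h1 : q ^ k = Real.exp (k * Real.log q) := by
    rw [Real.exp_nat_mul, Real.exp_log hq]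
  rw [h1, ← Real.exp_add, ← Real.exp_add, Real.exp_le_exp]
  have h2 : (Real.log q + 1) ^ 2 / (4 * a) - (k * (Real.log q + 1) - a * (k : ℝ) ^ 2) =
      (Real.log q + 1 - 2 * a * k) ^ 2 / (4 * a) := by
    field_simp
    ring
  have h3 : 0 ≤ (Real.log q + 1 - 2 * a * k) ^ 2 / (4 * a) := by positivity
  linarith

lemma alphOct_nonneg (k m : ℕ) : 0 ≤ alphOct k m := by
  unfold alphOct; positivity

lemma alphOct_le (k m : ℕ) : alphOct k m ≤ 384 * ((k + m + 7 : ℕ) : ℝ) ^ 10 := by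
  have h1 : (96 / π ^ 8 : ℝ) ≤ 96 := by
    apply div_le_self (by norm_num)
    exact one_le_pow₀ (by linarith [Real.pi_gt_three])
  have h2 : (((k + m + 6).choose (k + m + 3) : ℕ) : ℝ) ≤ ((k + m + 7 : ℕ) : ℝ) ^ 3 := by
    rw [Nat.choose_symm_of_eq_add (show k + m + 6 = (k + m + 3) + 3 by ring)]
    have : (k + m + 6).choose 3 ≤ (k + m + 7) ^ 3 :=
      (Nat.choose_le_pow _ _).trans (Nat.pow_le_pow_left (by omega) _)
    exact_mod_cast this
  have h3 : (((m + 5).choose m : ℕ) : ℝ) ≤ ((k + m + 7 : ℕ) : ℝ) ^ 5 := by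
    rw [Nat.choose_symm_of_eq_add (show m + 5 = m + 5 by ring)]
    have : (m + 5).choose 5 ≤ (k + m + 7) ^ 5 :=
      (Nat.choose_le_pow _ _).trans (Nat.pow_le_pow_left (by omega) _)
    exact_mod_cast this
  have h4 : (m + 3 : ℝ) ≤ 2 * ((k + m + 7 : ℕ) : ℝ) := by
    push_cast
    have : (0 : ℝ) ≤ k := Nat.cast_nonneg k
    have : (0 : ℝ) ≤ m := Nat.cast_nonneg m
    linarith
  have h5 : (2 * k + m + 7 : ℝ) ≤ 2 * ((k + m + 7 : ℕ) : ℝ) := by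
    push_cast
    have : (0 : ℝ) ≤ k := Nat.cast_nonneg k
    have : (0 : ℝ) ≤ m := Nat.cast_nonneg m
    linarith
  unfold alphOct
  calc _ ≤ 96 * (2 * ((k + m + 7 : ℕ) : ℝ)) * (2 * ((k + m + 7 : ℕ) : ℝ)) *
        ((k + m + 7 : ℕ) : ℝ) ^ 3 * ((k + m + 7 : ℕ) : ℝ) ^ 5 := by gcongr
    _ = _ := by ring

/-- Eigenvalues. -/
noncomputable def lamO (i : ℕ × ℕ) : ℝ := 4 * ((i.2 * (i.2 + i.1 + 7) + 2 * i.1 : ℕ) : ℝ)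

/-- Radial factors. -/
noncomputable def gO (i : ℕ × ℕ) (r : ℝ) : ℝ := alphOct i.2 i.1 * GG i.2 i.1 r

/-- Fibre factors. -/
noncomputable def hO (i : ℕ × ℕ) : ℝ → ℝ := hOct i.1

/-- Bounds for radial factors. -/
noncomputable def KO (i : ℕ × ℕ) : ℝ := alphOct i.2 i.1 * ((2 * i.2 + i.1 + 6).choose i.2 : ℕ)

lemma KO_le (m k : ℕ) (t : ℝ) (ht : 0 < t) :
    KO (m, k) * Real.exp (-lamO (m, k) * t) ≤
      (384 * ((Nat.factorial 10 : ℝ) / t ^ 10) * Real.exp (7 * t)) *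
      (Real.exp (-(7 * t)) ^ m * ((Real.exp t / t) ^ k * Real.exp (-(2 * t * (k : ℝ) ^ 2)))) := by
  have hk : (0 : ℝ) ≤ k := Nat.cast_nonneg k
  have hm : (0 : ℝ) ≤ m := Nat.cast_nonneg m
  set x : ℝ := ((k + m + 7 : ℕ) : ℝ) with hx
  have hx0 : 0 ≤ x := Nat.cast_nonneg _
  have hx' : x = k + m + 7 := by rw [hx]; push_cast; ring
  have h1 : alphOct k m ≤ 384 * ((Nat.factorial 10 : ℝ) / t ^ 10) * Real.exp (t * x) := by
    refine (alphOct_le k m).trans ?_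
    have := Real.pow_div_factorial_le_exp (t * x) (by positivity) 10
    rw [← hx]
    have e : x ^ 10 = ((Nat.factorial 10 : ℝ) / t ^ 10) * ((t * x) ^ 10 / (Nat.factorial 10 : ℝ)) := by
      have : (Nat.factorial 10 : ℝ) ≠ 0 := by positivity
      field_simp
    rw [e, mul_assoc]
    gcongr
  have h2 : (((2 * k + m + 6).choose k : ℕ) : ℝ) ≤ (2 * x) ^ k := by
    have : (2 * k + m + 6).choose k ≤ (2 * (k + m + 7)) ^ k :=
      (Nat.choose_le_pow _ _).trans (Nat.pow_le_pow_left (by omega) _)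
    rw [hx]
    exact_mod_cast this
  have h3 : 2 * x ≤ 1 / t * Real.exp (2 * x * t) := by
    have := Real.add_one_le_exp (2 * x * t)
    rw [div_mul_eq_mul_div, le_div_iff₀ ht]
    linarith
  have h4 : (2 * x) ^ k ≤ (1 / t) ^ k * Real.exp (k * (2 * x * t)) := by
    rw [Real.exp_nat_mul, ← mul_pow]
    gcongr
  have h5 : lamO (m, k) = 4 * (k * x + 2 * m) := by
    rw [lamO, hx]; push_cast; ring
  have h6 : KO (m, k) ≤ (384 * ((Nat.factorial 10 : ℝ) / t ^ 10) * Real.exp (t * x)) *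
      ((1 / t) ^ k * Real.exp (k * (2 * x * t))) := by
    unfold KO
    exact mul_le_mul h1 (h2.trans h4) (Nat.cast_nonneg _) (by positivity)
  have h7 : Real.exp (t * x) * Real.exp (k * (2 * x * t)) * Real.exp (-lamO (m, k) * t) ≤
      Real.exp (7 * t) * Real.exp (-(7 * t)) ^ m * Real.exp t ^ k *
        Real.exp (-(2 * t * (k : ℝ) ^ 2)) := by
    rw [← Real.exp_nat_mul, ← Real.exp_nat_mul, ← Real.exp_add, ← Real.exp_add, ← Real.exp_add,
      ← Real.exp_add, ← Real.exp_add, Real.exp_le_exp, h5, hx']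
    have : 0 ≤ t * (k * (m + 7)) := by positivity
    nlinarith
  calc _ ≤ (384 * ((Nat.factorial 10 : ℝ) / t ^ 10) * Real.exp (t * x)) *
      ((1 / t) ^ k * Real.exp (k * (2 * x * t))) * Real.exp (-lamO (m, k) * t) := by gcongr
    _ = 384 * ((Nat.factorial 10 : ℝ) / t ^ 10) * (1 / t) ^ k *
      (Real.exp (t * x) * Real.exp (k * (2 * x * t)) * Real.exp (-lamO (m, k) * t)) := by ring
    _ ≤ 384 * ((Nat.factorial 10 : ℝ) / t ^ 10) * (1 / t) ^ k * (Real.exp (7 * t) *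
      Real.exp (-(7 * t)) ^ m * Real.exp t ^ k * Real.exp (-(2 * t * (k : ℝ) ^ 2))) := by gcongr
    _ = _ := by rw [div_pow (Real.exp t), div_pow]; ring

lemma KO_nonneg (i : ℕ × ℕ) : 0 ≤ KO i := mul_nonneg (alphOct_nonneg _ _) (Nat.cast_nonneg _)

lemma hK_O (t : ℝ) (ht : 0 < t) : Summable fun i => KO i * Real.exp (-lamO i * t) := by
  have s1 : Summable fun m : ℕ => Real.exp (-(7 * t)) ^ m :=
    summable_geometric_of_lt_one (Real.exp_pos _).le (by rw [Real.exp_lt_one_iff]; linarith)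
  have s2 := gauss_summable (Real.exp t / t) (2 * t) (by positivity) (by positivity)
  have s3 := (s1.mul_of_nonneg s2 (fun m => by positivity) (fun m => by positivity)).mul_left
    (384 * ((Nat.factorial 10 : ℝ) / t ^ 10) * Real.exp (7 * t))
  refine Summable.of_nonneg_of_le (fun i => mul_nonneg (KO_nonneg i) (Real.exp_pos _).le)
    (fun i => ?_) s3
  exact KO_le i.1 i.2 t ht

lemma lam_nonneg (i : ℕ × ℕ) : 0 ≤ lamO i := by unfold lamO; positivity

lemma hg_O (i : ℕ × ℕ) : BT (lamO i) (KO i) (gO i) := by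
  have h := (GG_BT i.2 i.1).const_mul (alphOct i.2 i.1)
  rw [abs_of_nonneg (alphOct_nonneg _ _)] at h
  have hle : (i.1 + 2 * i.2 : ℝ) ≤ lamO i := by
    unfold lamO
    have : i.1 + 2 * i.2 ≤ 4 * (i.2 * (i.2 + i.1 + 7) + 2 * i.1) := by nlinarith
    exact_mod_cast this
  exact h.mono (by positivity) (KO_nonneg i) hle le_rfl

lemma hh_O (i : ℕ × ℕ) : BT (lamO i) 1 (hO i) := by
  have hle : (i.1 : ℝ) ≤ lamO i := by
    unfold lamO
    have : i.1 ≤ 4 * (i.2 * (i.2 + i.1 + 7) + 2 * i.1) := by nlinarith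
    exact_mod_cast this
  exact (hOct_BT i.1).mono (by positivity) zero_le_one hle le_rfl

/-- The series of formal mixed derivatives. -/
noncomputable def SO (a b c : ℕ) (x : ℝ × ℝ × ℝ) : ℝ := ∑' i, TT lamO gO hO a b c i x

lemma TT_zero (i : ℕ × ℕ) (t r η : ℝ) : TT lamO gO hO 0 0 0 i (t, r, η) =
    alphOct i.2 i.1 * hOct i.1 η *
          Real.exp (-(4 * ((i.2 * (i.2 + i.1 + 7) + 2 * i.1 : ℕ) : ℝ)) * t) *
          (Real.cos r) ^ i.1 * (jacP i.2 (i.1 + 3)).eval (Real.cos (2 * r)) := by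
  simp only [TT, iteratedDeriv_zero, pow_zero, lamO, gO, hO, GG]
  ring

lemma pOct_eq (t r η : ℝ) (ht : 0 < t) : pOct t r η = SO 0 0 0 (t, r, η) := by
  have h := TT_summable lam_nonneg hg_O hh_O hK_O 0 0 0 (t, r, η) ht
  rw [SO, h.tsum_prod, pOct]
  simp only [TT_zero]

lemma term_heat (i : ℕ × ℕ) (t r η : ℝ) (hs : Real.sin r ≠ 0) (hc : Real.cos r ≠ 0)
    (hη : Real.sin η ≠ 0) :
    TT lamO gO hO 1 0 0 i (t, r, η) = TT lamO gO hO 0 2 0 i (t, r, η) +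
      (7 * Real.cot r - 7 * Real.tan r) * TT lamO gO hO 0 1 0 i (t, r, η) +
      Real.tan r ^ 2 * (TT lamO gO hO 0 0 2 i (t, r, η) +
        6 * Real.cot η * TT lamO gO hO 0 0 1 i (t, r, η)) := by
  have h1 := GG_ode i.2 i.1 r hs hc
  have h2 := hOct_ode i.1 η hη
  have e : ∀ n, iteratedDeriv n (gO i) r = alphOct i.2 i.1 * iteratedDeriv n (GG i.2 i.1) r := by
    intro n
    exact iteratedDeriv_const_mul_field _ _
  have e3 : lamO i = 4 * (i.2 * (i.2 + i.1 + 7) + 2 * i.1) := by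
    unfold lamO; push_cast; ring
  simp only [TT, e, pow_zero, pow_one, hO]
  simp only [iteratedDeriv_zero]
  generalize Real.exp (-lamO i * t) = E
  rw [e3]
  linear_combination (-(E * alphOct i.2 i.1 * hOct i.1 η)) * h1 -
    (E * alphOct i.2 i.1 * Real.tan r ^ 2 * GG i.2 i.1 r) * h2

end assembly

/-- For `t > 0`, `r ∈ (0,π/2)`, `η ∈ (0,π)`, the double series defining `p_t(r,η)` converges,
`p` is smooth in `(t,r,η)`, and `p` satisfies the heat equation of the radial part of the
sub-Laplacian of the octonionic Hopf fibration. -/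
theorem pOct_converges_smooth_heat (t r η : ℝ) (ht : 0 < t)
    (hr : r ∈ Set.Ioo 0 (π / 2)) (hη : η ∈ Set.Ioo 0 π) :
    Summable (fun mk : ℕ × ℕ =>
        alphOct mk.2 mk.1 * hOct mk.1 η *
          Real.exp (-(4 * ((mk.2 * (mk.2 + mk.1 + 7) + 2 * mk.1 : ℕ) : ℝ)) * t) *
          (Real.cos r) ^ mk.1 * (jacP mk.2 (mk.1 + 3)).eval (Real.cos (2 * r)))
      ∧ ContDiffOn ℝ (⊤ : ℕ∞) (fun x : ℝ × ℝ × ℝ => pOct x.1 x.2.1 x.2.2)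
          (Set.Ioi 0 ×ˢ Set.Ioo 0 (π / 2) ×ˢ Set.Ioo 0 π)
      ∧ deriv (fun s => pOct s r η) t
          = deriv (deriv (fun ρ => pOct t ρ η)) r
            + (7 * Real.cot r - 7 * Real.tan r) * deriv (fun ρ => pOct t ρ η) r
            + Real.tan r ^ 2 *
                (deriv (deriv (fun θ => pOct t r θ)) η
                  + 6 * Real.cot η * deriv (fun θ => pOct t r θ) η) := by
  have hs : Real.sin r ≠ 0 := (Real.sin_pos_of_pos_of_lt_pi hr.1 (by linarith [hr.2, Real.pi_pos])).ne'
  have hc : Real.cos r ≠ 0 := (Real.cos_pos_of_mem_Ioo ⟨by linarith [hr.1, Real.pi_pos], hr.2⟩).ne'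
  have hse : Real.sin η ≠ 0 := (Real.sin_pos_of_pos_of_lt_pi hη.1 hη.2).ne'
  have hsum : ∀ a b c, Summable fun i => TT lamO gO hO a b c i (t, r, η) := fun a b c =>
    TT_summable lam_nonneg hg_O hh_O hK_O a b c (t, r, η) ht
  refine ⟨?_, ?_, ?_⟩
  · have h := hsum 0 0 0
    simp only [TT_zero] at h
    exact h
  · rw [contDiffOn_infty]
    intro n
    have h := SS_contDiffOn lam_nonneg hg_O hh_O hK_O n 0 0 0
    refine (h.mono fun x hx => hx.1).congr fun x hx => ?_
    exact pOct_eq x.1 x.2.1 x.2.2 hx.1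
  · have d1 : deriv (fun s => pOct s r η) t = SO 1 0 0 (t, r, η) := by
      have h := SS_hasDerivAt1 lam_nonneg hg_O hh_O hK_O 0 0 0 t r η ht
      refine (h.congr_of_eventuallyEq ?_).deriv
      filter_upwards [lt_mem_nhds ht] with s hs0
      exact pOct_eq s r η hs0
    have d2 : deriv (fun ρ => pOct t ρ η) = fun ρ => SO 0 1 0 (t, ρ, η) := by
      have e : (fun ρ => pOct t ρ η) = fun ρ => SO 0 0 0 (t, ρ, η) :=
        funext fun ρ => pOct_eq t ρ η ht
      rw [e]
      exact funext fun ρ => (SS_hasDerivAt2 lam_nonneg hg_O hh_O hK_O 0 0 0 t ρ η ht).deriv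
    have d3 : deriv (fun ρ => SO 0 1 0 (t, ρ, η)) r = SO 0 2 0 (t, r, η) :=
      (SS_hasDerivAt2 lam_nonneg hg_O hh_O hK_O 0 1 0 t r η ht).deriv
    have d4 : deriv (fun θ => pOct t r θ) = fun θ => SO 0 0 1 (t, r, θ) := by
      have e : (fun θ => pOct t r θ) = fun θ => SO 0 0 0 (t, r, θ) :=
        funext fun θ => pOct_eq t r θ ht
      rw [e]
      exact funext fun θ => (SS_hasDerivAt3 lam_nonneg hg_O hh_O hK_O 0 0 0 t r θ ht).deriv
    have d5 : deriv (fun θ => SO 0 0 1 (t, r, θ)) η = SO 0 0 2 (t, r, η) :=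
      (SS_hasDerivAt3 lam_nonneg hg_O hh_O hK_O 0 0 1 t r η ht).deriv
    rw [d1, d2, d3, d4, d5]
    have hrhs := (((hsum 0 2 0).hasSum.add
      ((hsum 0 1 0).hasSum.mul_left (7 * Real.cot r - 7 * Real.tan r))).add
      (((hsum 0 0 2).hasSum.add ((hsum 0 0 1).hasSum.mul_left (6 * Real.cot η))).mul_left
        (Real.tan r ^ 2)))
    have hl := (hsum 1 0 0).hasSum
    have hf := funext fun i => term_heat i t r η hs hc hse
    rw [← hf] at hrhs
    exact hl.unique hrhs
end

section
/- For every integer m ≥ 0, ∫_0^π h_m(η)² sin⁶η dη = (√π·Γ(7/2)/(Γ(4)·(2m+6))) · (6!·m!/(m+5)!). -/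
open Real MeasureTheory Filter Topology

/-- The complex Laplace-type integral whose real part gives `hOct`. -/
noncomputable def hAuxZ (η φ : ℝ) : ℂ :=
  (Real.cos η : ℂ) + Complex.I * ((Real.sin η * Real.cos φ : ℝ) : ℂ)

lemma hAuxZ_cont (η : ℝ) : Continuous (hAuxZ η) := by
  unfold hAuxZ; fun_prop

lemma hAuxZ_deriv (η φ : ℝ) :
    HasDerivAt (hAuxZ η) (Complex.I * ((Real.sin η * (-Real.sin φ) : ℝ) : ℂ)) φ := by
  unfold hAuxZ
  exact ((((Real.hasDerivAt_cos φ).const_mul (Real.sin η)).ofReal_comp).const_mul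
    Complex.I).const_add _

noncomputable def hAuxJ (m : ℕ) (η : ℝ) : ℂ :=
  ∫ φ in (0 : ℝ)..π, (hAuxZ η φ) ^ m * ((Real.sin φ ^ 5 : ℝ) : ℂ)

lemma hAux_int (m : ℕ) (η : ℝ) : IntervalIntegrable
    (fun φ => (hAuxZ η φ) ^ m * ((Real.sin φ ^ 5 : ℝ) : ℂ)) volume 0 π := by
  have := hAuxZ_cont η
  exact Continuous.intervalIntegrable (by fun_prop) _ _

lemma hOct_eq (m : ℕ) (η : ℝ) :
    hOct m η = (Real.Gamma (7 / 2) / (Real.sqrt π * Real.Gamma 3)) * (hAuxJ m η).re := by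
  unfold hOct hAuxJ
  congr 1
  rw [← Complex.reCLM_apply, ← ContinuousLinearMap.intervalIntegral_comp_comm _ (hAux_int m η)]
  apply intervalIntegral.integral_congr
  intro φ _
  simp only [Complex.reCLM_apply, Complex.re_mul_ofReal, hAuxZ]

lemma hAuxZ_sq (η φ : ℝ) : (hAuxZ η φ) ^ 2 =
    2 * (Real.cos η : ℂ) * hAuxZ η φ - 1 + ((Real.sin η : ℝ) : ℂ) ^ 2 * ((Real.sin φ : ℝ) : ℂ) ^ 2 := by
  unfold hAuxZ
  have h1 : ((Real.sin η : ℝ) : ℂ) ^ 2 + ((Real.cos η : ℝ) : ℂ) ^ 2 = 1 := by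
    exact_mod_cast Real.sin_sq_add_cos_sq η
  have h2 : ((Real.sin φ : ℝ) : ℂ) ^ 2 + ((Real.cos φ : ℝ) : ℂ) ^ 2 = 1 := by
    exact_mod_cast Real.sin_sq_add_cos_sq φ
  rw [Complex.ofReal_mul]
  linear_combination (((Real.sin η : ℝ) : ℂ) ^ 2 * ((Real.cos φ : ℝ) : ℂ) ^ 2) * Complex.I_sq
    - h1 - (((Real.sin η : ℝ) : ℂ) ^ 2) * h2 + 2 * h1 * 0

lemma hAuxJ_one (η : ℝ) : hAuxJ 1 η = (Real.cos η : ℂ) * hAuxJ 0 η := by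
  have key : ∫ φ in (0 : ℝ)..π, ((hAuxZ η φ) ^ 1 * ((Real.sin φ ^ 5 : ℝ) : ℂ)
      - (Real.cos η : ℂ) * ((hAuxZ η φ) ^ 0 * ((Real.sin φ ^ 5 : ℝ) : ℂ))) = 0 := by
    rw [intervalIntegral.integral_eq_sub_of_hasDerivAt
      (f := fun φ => Complex.I * ((Real.sin η * (Real.sin φ ^ 6 / 6) : ℝ) : ℂ))]
    · simp
    · intro φ _
      have h := ((((((Real.hasDerivAt_sin φ).pow 6).div_const 6).const_mul
        (Real.sin η)).ofReal_comp).const_mul Complex.I)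
      refine h.congr_deriv ?_
      simp [hAuxZ]
      ring
    · exact (hAux_int 1 η).sub ((hAux_int 0 η).const_mul _)
  rw [intervalIntegral.integral_sub (hAux_int 1 η) ((hAux_int 0 η).const_mul _),
    intervalIntegral.integral_const_mul] at key
  exact sub_eq_zero.mp key

lemma hAuxJ_rec (m : ℕ) (η : ℝ) : ((m : ℂ) + 7) * hAuxJ (m + 2) η
    = (2 * m + 8) * (Real.cos η : ℂ) * hAuxJ (m + 1) η - (m + 1) * hAuxJ m η := by
  have i2 := (hAux_int (m + 2) η).const_mul ((m : ℂ) + 7)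
  have i1 := (hAux_int (m + 1) η).const_mul ((2 * m + 8) * (Real.cos η : ℂ))
  have i0 := (hAux_int m η).const_mul ((m : ℂ) + 1)
  have key : ∫ φ in (0 : ℝ)..π, (((m : ℂ) + 7) * ((hAuxZ η φ) ^ (m + 2) * ((Real.sin φ ^ 5 : ℝ) : ℂ))
      - ((2 * m + 8) * (Real.cos η : ℂ) * ((hAuxZ η φ) ^ (m + 1) * ((Real.sin φ ^ 5 : ℝ) : ℂ))
      - (m + 1) * ((hAuxZ η φ) ^ m * ((Real.sin φ ^ 5 : ℝ) : ℂ)))) = 0 := by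
    rw [intervalIntegral.integral_eq_sub_of_hasDerivAt
      (f := fun φ => (hAuxZ η φ) ^ (m + 1) *
        (Complex.I * ((Real.sin η * (Real.sin φ ^ 6) : ℝ) : ℂ)))]
    · simp
    · intro φ _
      have h := ((hAuxZ_deriv η φ).pow (m + 1)).mul (((((Real.hasDerivAt_sin φ).pow 6).const_mul
        (Real.sin η)).ofReal_comp).const_mul Complex.I)
      refine h.congr_deriv (Eq.symm ?_)
      have hs := hAuxZ_sq η φ
      have hz : hAuxZ η φ = (Real.cos η : ℂ) +
        Complex.I * (((Real.sin η : ℝ) : ℂ) * ((Real.cos φ : ℝ) : ℂ)) := by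
        simp [hAuxZ]
      have hI := Complex.I_sq
      simp only [Pi.pow_apply]
      push_cast [Nat.add_sub_cancel]
      push_cast at hs hz
      generalize hAuxZ η φ = z at *
      generalize Complex.sin φ = a at *
      generalize Complex.cos φ = b at *
      generalize Complex.sin η = s at *
      generalize Complex.cos η = c at *
      rw [pow_succ z (m + 1), pow_succ z m]
      linear_combination (z ^ m * a ^ 5 * (m + 1)) * hs + 6 * (z ^ m * z * a ^ 5) * hz
        + ((m + 1) * z ^ m * s ^ 2 * a ^ 7) * hI
    · exact i2.sub (i1.sub i0)
  rw [intervalIntegral.integral_sub i2 (i1.sub i0), intervalIntegral.integral_sub i1 i0,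
    intervalIntegral.integral_const_mul, intervalIntegral.integral_const_mul,
    intervalIntegral.integral_const_mul] at key
  exact sub_eq_zero.mp key

lemma hGamma : Real.Gamma (7 / 2) = 15 / 8 * Real.sqrt π := by
  rw [show (7 / 2 : ℝ) = 5 / 2 + 1 by norm_num, Real.Gamma_add_one (by norm_num),
    show (5 / 2 : ℝ) = 3 / 2 + 1 by norm_num, Real.Gamma_add_one (by norm_num),
    show (3 / 2 : ℝ) = 1 / 2 + 1 by norm_num, Real.Gamma_add_one (by norm_num),
    Real.Gamma_one_half_eq]
  ring

lemma hGamma3 : Real.Gamma 3 = 2 := by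
  rw [show (3 : ℝ) = ((2 : ℕ) : ℝ) + 1 by norm_num, Real.Gamma_nat_eq_factorial 2]
  norm_num [Nat.factorial]

lemma hGamma4 : Real.Gamma 4 = 6 := by
  rw [show (4 : ℝ) = ((3 : ℕ) : ℝ) + 1 by norm_num, Real.Gamma_nat_eq_factorial 3]
  norm_num [Nat.factorial]

lemma hOct_zero (η : ℝ) : hOct 0 η = 1 := by
  have hp : Real.sqrt π ≠ 0 := by positivity
  have h5 : ∫ φ in (0 : ℝ)..π, Real.sin φ ^ 5 = 16 / 15 := by
    rw [show 5 = 2 * 2 + 1 by norm_num, integral_sin_pow_odd]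
    norm_num [Finset.prod_range_succ]
  unfold hOct
  simp only [pow_zero, Complex.one_re, one_mul]
  rw [h5, hGamma, hGamma3]
  field_simp
  norm_num

lemma hOct_one (η : ℝ) : hOct 1 η = Real.cos η := by
  have h0 := hOct_zero η
  rw [hOct_eq] at h0
  rw [hOct_eq, hAuxJ_one, Complex.re_ofReal_mul]
  linear_combination Real.cos η * h0

lemma hOct_rec (m : ℕ) (η : ℝ) : ((m : ℝ) + 7) * hOct (m + 2) η
    = (2 * m + 8) * Real.cos η * hOct (m + 1) η - (m + 1) * hOct m η := by
  have h := hAuxJ_rec m η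
  have h' : (((m : ℝ) + 7 : ℝ) : ℂ) * hAuxJ (m + 2) η
    = (((2 * m + 8) * Real.cos η : ℝ) : ℂ) * hAuxJ (m + 1) η - ((m + 1 : ℝ) : ℂ) * hAuxJ m η := by
    push_cast at h ⊢
    exact h
  have h2 := congrArg Complex.re h'
  rw [Complex.sub_re, Complex.re_ofReal_mul, Complex.re_ofReal_mul, Complex.re_ofReal_mul] at h2
  simp only [hOct_eq]
  linear_combination (Real.Gamma (7 / 2) / (Real.sqrt π * Real.Gamma 3)) * h2

lemma hOct_deriv (m : ℕ) : Differentiable ℝ (hOct m) ∧ Differentiable ℝ (hOct (m + 1)) ∧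
    (∀ η, Real.sin η * deriv (hOct (m + 1)) η
      = (m + 1) * (Real.cos η * hOct (m + 1) η - hOct m η)) ∧
    (∀ η, Real.sin η * deriv (hOct m) η
      = (m + 6) * (hOct (m + 1) η - Real.cos η * hOct m η)) := by
  induction m with
  | zero =>
    have e0 : hOct 0 = fun _ => 1 := funext hOct_zero
    have e1 : hOct (0 + 1) = Real.cos := funext hOct_one
    rw [e0, e1]
    refine ⟨by fun_prop, Real.differentiable_cos, ?_, ?_⟩
    · intro η
      rw [Real.deriv_cos]
      push_cast
      linear_combination - Real.sin_sq_add_cos_sq η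
    · intro η
      simp
  | succ m ih =>
    obtain ⟨d0, d1, hl, hr⟩ := ih
    have hm : (m : ℝ) + 7 ≠ 0 := by positivity
    have e2 : hOct (m + 1 + 1) = fun η => ((2 * m + 8) * (Real.cos η * hOct (m + 1) η)
        - (m + 1) * hOct m η) / (m + 7) := by
      funext η
      rw [eq_div_iff hm]
      linear_combination hOct_rec m η
    have hd : ∀ η, HasDerivAt (hOct (m + 1 + 1)) (((2 * m + 8) * (-Real.sin η * hOct (m + 1) η
        + Real.cos η * deriv (hOct (m + 1)) η) - (m + 1) * deriv (hOct m) η) / (m + 7)) η := by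
      intro η
      rw [e2]
      exact (((((Real.hasDerivAt_cos η).mul (d1 η).hasDerivAt).const_mul _).sub
        ((d0 η).hasDerivAt.const_mul _)).div_const _)
    refine ⟨d1, fun η => (hd η).differentiableAt, ?_, ?_⟩
    · intro η
      rw [(hd η).deriv]
      have hrec := hOct_rec m η
      have hs := Real.sin_sq_add_cos_sq η
      have h1 := hl η
      have h0 := hr η
      apply mul_left_cancel₀ hm
      have : ((m : ℝ) + 7) * (Real.sin η * (((2 * m + 8) * (-Real.sin η * hOct (m + 1) η
        + Real.cos η * deriv (hOct (m + 1)) η) - (m + 1) * deriv (hOct m) η) / (m + 7)))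
        = Real.sin η * ((2 * m + 8) * (-Real.sin η * hOct (m + 1) η
        + Real.cos η * deriv (hOct (m + 1)) η) - (m + 1) * deriv (hOct m) η) := by
        field_simp
      rw [this]
      push_cast
      linear_combination (2 * m + 8) * Real.cos η * h1 - (m + 1) * h0
        - (2 * m + 8) * hOct (m + 1) η * hs - (m + 2) * Real.cos η * hrec
    · intro η
      push_cast
      linear_combination hl η - hOct_rec m η

lemma hOct_cont (m : ℕ) : Continuous (hOct m) := (hOct_deriv m).1.continuous

lemma hOct_orth (m : ℕ) :
    ∫ η in (0 : ℝ)..π, hOct (m + 2) η * hOct m η * Real.sin η ^ 6 = 0 := by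
  have c0 := hOct_cont m
  have c1 := hOct_cont (m + 1)
  have c2 := hOct_cont (m + 2)
  have key : ∫ η in (0 : ℝ)..π, (-(4 * m + 16) : ℝ) *
      (hOct (m + 2) η * hOct m η * Real.sin η ^ 6) = 0 := by
    rw [intervalIntegral.integral_eq_sub_of_hasDerivAt
      (f := fun η => Real.sin η ^ 5 *
        ((m + 2) * ((Real.cos η * hOct (m + 2) η - hOct (m + 1) η) * hOct m η)
        - (m + 6) * (hOct (m + 2) η * (hOct (m + 1) η - Real.cos η * hOct m η))))]
    · simp
    · intro η _
      obtain ⟨d0, d1, hl1, hr0⟩ := hOct_deriv m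
      obtain ⟨-, d2, hl2, hr1⟩ := hOct_deriv (m + 1)
      have D0 := (d0 η).hasDerivAt
      have D1 := (d1 η).hasDerivAt
      have D2 := (d2 η).hasDerivAt
      have hc := Real.hasDerivAt_cos η
      have h := ((Real.hasDerivAt_sin η).pow 5).mul
        (((((hc.mul D2).sub D1).mul D0).const_mul ((m : ℝ) + 2)).sub
          ((D2.mul (D1.sub (hc.mul D0))).const_mul ((m : ℝ) + 6)))
      refine h.congr_deriv (Eq.symm ?_)
      have hl1 := hl1 η
      have hl2 := hl2 η
      have hr0 := hr0 η
      have hr1 := hr1 η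
      have hs := Real.sin_sq_add_cos_sq η
      simp only [Pi.pow_apply, Pi.mul_apply, Pi.sub_apply]
      push_cast at *
      simp only [add_assoc, Nat.reduceAdd, Nat.reduceSub] at *
      generalize deriv (hOct m) η = q0 at *
      generalize deriv (hOct (m + 1)) η = q1 at *
      generalize deriv (hOct (m + 2)) η = q2 at *
      generalize hOct m η = h0 at *
      generalize hOct (m + 1) η = h1 at *
      generalize hOct (m + 2) η = h2 at *
      generalize Real.sin η = s at *
      generalize Real.cos η = c at *
      have G : (-(4 * m + 16) : ℝ) * (h2 * h0 * s ^ 2) =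
          5 * c * ((m + 2) * ((c * h2 - h1) * h0) - (m + 6) * (h2 * (h1 - c * h0)))
          + s * ((m + 2) * ((-s * h2 + c * q2 - q1) * h0 + (c * h2 - h1) * q0)
            - (m + 6) * (q2 * (h1 - c * h0) + h2 * (q1 - (-s * h0 + c * q0)))) := by
        linear_combination (-(m + 2) * c * h0 + (m + 6) * (h1 - c * h0)) * hl2
          + (m + 2) * h0 * hr1 + (m + 6) * h2 * hl1
          - ((m + 2) * (c * h2 - h1) + (m + 6) * h2 * c) * hr0
          - (2 * m + 8) * h2 * h0 * hs
      linear_combination s ^ 4 * G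
    · exact Continuous.intervalIntegrable (by fun_prop) _ _
  rw [intervalIntegral.integral_const_mul] at key
  have : (-(4 * m + 16) : ℝ) ≠ 0 := by
    have : (0 : ℝ) ≤ m := by positivity
    linarith
  exact (mul_eq_zero.mp key).resolve_left this

lemma hOct_mid (m : ℕ) :
    (2 * m + 8) * ∫ η in (0 : ℝ)..π, Real.cos η * hOct (m + 1) η * hOct m η * Real.sin η ^ 6
    = (m + 1) * ∫ η in (0 : ℝ)..π, (hOct m η) ^ 2 * Real.sin η ^ 6 := by
  have c0 := hOct_cont m
  have c1 := hOct_cont (m + 1)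
  have h := hOct_orth m
  rw [← intervalIntegral.integral_const_mul, ← intervalIntegral.integral_const_mul, ← sub_eq_zero,
    ← intervalIntegral.integral_sub (Continuous.intervalIntegrable (by fun_prop) _ _)
      (Continuous.intervalIntegrable (by fun_prop) _ _)]
  refine Eq.trans ?_ ((congrArg (fun x => ((m : ℝ) + 7) * x) h).trans (mul_zero _))
  beta_reduce
  rw [← intervalIntegral.integral_const_mul]
  apply intervalIntegral.integral_congr
  intro η _
  simp only
  linear_combination -(hOct m η * Real.sin η ^ 6) * hOct_rec m η

lemma hOct_step (m : ℕ) :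
    ((m : ℝ) + 6) * ∫ η in (0 : ℝ)..π, (hOct (m + 1) η) ^ 2 * Real.sin η ^ 6
    = (2 * m + 6) *
      ∫ η in (0 : ℝ)..π, Real.cos η * hOct (m + 1) η * hOct m η * Real.sin η ^ 6 := by
  cases m with
  | zero =>
    rw [← intervalIntegral.integral_const_mul, ← intervalIntegral.integral_const_mul]
    apply intervalIntegral.integral_congr
    intro η _
    simp only [zero_add, hOct_one, hOct_zero]
    push_cast
    ring
  | succ n =>
    have c0 := hOct_cont n
    have c1 := hOct_cont (n + 1)
    have c2 := hOct_cont (n + 2)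
    have h := hOct_orth n
    have c3 : Continuous (hOct (n + 1 + 1)) := c2
    rw [← intervalIntegral.integral_const_mul, ← intervalIntegral.integral_const_mul, ← sub_eq_zero,
      ← intervalIntegral.integral_sub (Continuous.intervalIntegrable (by fun_prop) _ _)
        (Continuous.intervalIntegrable (by fun_prop) _ _)]
    refine Eq.trans ?_ ((congrArg (fun x => (-((n : ℝ) + 1)) * x) h).trans (mul_zero _))
    beta_reduce
    rw [← intervalIntegral.integral_const_mul]
    apply intervalIntegral.integral_congr
    intro η _
    simp only
    push_cast
    linear_combination (hOct (n + 2) η * Real.sin η ^ 6) * hOct_rec n η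

/-- `L²` norm of the eigenfunctions `h_m`:
`∫_0^π h_m(η)² sin⁶η dη = (√π Γ(7/2)/(Γ(4)(2m+6))) · 6! m!/(m+5)!`. -/
theorem hOct_norm (m : ℕ) :
    ∫ η in (0 : ℝ)..π, (hOct m η) ^ 2 * Real.sin η ^ 6
      = Real.sqrt π * Real.Gamma (7 / 2) / (Real.Gamma 4 * (2 * (m : ℝ) + 6)) *
          ((Nat.factorial 6 : ℝ) * (Nat.factorial m : ℝ) / (Nat.factorial (m + 5) : ℝ)) := by
  have hp : Real.sqrt π * Real.sqrt π = π := Real.mul_self_sqrt Real.pi_pos.le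
  rw [hGamma, hGamma4]
  rw [show Real.sqrt π * (15 / 8 * Real.sqrt π) = 15 / 8 * π by linear_combination 15 / 8 * hp]
  induction m with
  | zero =>
    simp only [hOct_zero]
    simp only [one_pow, one_mul]
    have h6 := integral_sin_pow_even 3
    rw [show 2 * 3 = 6 by norm_num] at h6
    rw [h6]
    norm_num [Finset.prod_range_succ, Nat.factorial]
    ring
  | succ m ih =>
    have h1 := hOct_mid m
    have h2 := hOct_step m
    rw [ih] at h1
    have a1 : (m : ℝ) + 6 ≠ 0 := by positivity
    have a2 : (2 * (m : ℝ) + 8) ≠ 0 := by positivity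
    have f5 : ((m + 5).factorial : ℝ) ≠ 0 := by positivity
    have a3 : (2 * (m : ℝ) + 6) ≠ 0 := by positivity
    apply mul_left_cancel₀ a1
    apply mul_left_cancel₀ a2
    rw [h2, mul_left_comm, h1]
    rw [show m + 1 + 5 = (m + 5) + 1 by ring, Nat.factorial_succ (m + 5), Nat.factorial_succ m]
    push_cast
    have a4 : (2 * ((m : ℝ) + 1) + 6) ≠ 0 := by positivity
    have a5 : ((m : ℝ) + 5 + 1) ≠ 0 := by positivity
    field_simp
    ring
end
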